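/- arXiv:1002.3256 — 4 statements merged into one kernel-verified Lean document; each statement's English description precedes it below -/
import Mathlib

section
/- Under Jacod's density hypothesis, for all 0 ≤ t ≤ θ and every bounded nonnegative F_θ ⊗ B(ℝ)-measurable function φ_θ : Ω × ℝ → ℝ, there exists an F_t ⊗ B(ℝ)-measurable function v : Ω × ℝ → ℝ such that for P^L-almost every x ∈ ℝ, v(·,x) is a version of the conditional expectation E_P[φ_θ(·,x) p_θ(x) 1_{X*_θ > x} | F_t]; and for every such function v one has, P-almost surely, E_P[φ_θ(·,L) 1_{τ > θ} | G^M_t] = v(·,L) / p_t(L). (Proposition 3.1 of the paper.) -/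
open MeasureTheory ProbabilityTheory Set
open scoped NNReal Classical

noncomputable section

/-- Running infimum `X*_t = inf_{s ≤ t} X_s` of the process `X` over the time interval
`[0, t]`. -/
def runInf {Ω : Type*} (X : ℝ≥0 → Ω → ℝ) (t : ℝ≥0) (ω : Ω) : ℝ :=
  ⨅ s : Set.Icc (0 : ℝ≥0) t, X s.1 ω

open scoped ENNReal

/-- Sections of jointly measurable functions are measurable. -/
lemma aux_section {Ω β : Type*} [MeasurableSpace β] {m : MeasurableSpace Ω} {V : Ω × ℝ → β}
    (hV : Measurable[m.prod inferInstance] V) (x : ℝ) : Measurable[m] fun ω => V (ω, x) :=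
  Measurable.comp hV measurable_prodMk_right

lemma aux_tsum {α : Type*} {m : MeasurableSpace α} {V : ℕ → α → ℝ≥0∞}
    (hV : ∀ n, Measurable (V n)) : Measurable fun q => ∑' n, V n q := by
  simp_rw [ENNReal.tsum_eq_iSup_nat]
  exact Measurable.iSup fun n => Finset.measurable_fun_sum _ fun i _ => hV i

lemma aux_prod_le {Ω : Type*} {m m0 : MeasurableSpace Ω} (hm : m ≤ m0) :
    m.prod (inferInstance : MeasurableSpace ℝ) ≤ m0.prod inferInstance :=
  sup_le_sup (MeasurableSpace.comap_mono hm) le_rfl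

/-- The graph map `ω ↦ (ω, L ω)` is measurable from `m ⊔ σ(L)` to `m ⊗ B(ℝ)`. -/
lemma aux_graph {Ω β : Type*} [MeasurableSpace β] {m : MeasurableSpace Ω} (L : Ω → ℝ)
    {V : Ω × ℝ → β} (hV : Measurable[m.prod inferInstance] V) :
    Measurable[m ⊔ MeasurableSpace.comap L inferInstance] fun ω => V (ω, L ω) := by
  have h1 : @Measurable Ω (Ω × ℝ) (m ⊔ MeasurableSpace.comap L inferInstance)
      (m.prod inferInstance) (fun ω => (ω, L ω)) := by
    refine @Measurable.prodMk Ω (m ⊔ MeasurableSpace.comap L inferInstance) Ω ℝ m _ _ _ ?_ ?_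
    · exact measurable_id'' le_sup_left
    · exact (comap_measurable L).mono le_sup_right le_rfl
  exact hV.comp h1

/-- Every set of `m ⊔ σ(L)` is the preimage of a set of `m ⊗ B(ℝ)` under the graph map. -/
lemma aux_graph_set {Ω : Type*} {m : MeasurableSpace Ω} (L : Ω → ℝ) {A : Set Ω}
    (hA : MeasurableSet[m ⊔ MeasurableSpace.comap L inferInstance] A) :
    ∃ S : Set (Ω × ℝ), MeasurableSet[m.prod inferInstance] S ∧ (fun ω => (ω, L ω)) ⁻¹' S = A := by
  have h : m ⊔ MeasurableSpace.comap L inferInstance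
      = MeasurableSpace.comap (fun ω => (ω, L ω)) (m.prod inferInstance) := by
    rw [MeasurableSpace.prod, MeasurableSpace.comap_sup, MeasurableSpace.comap_comp,
      MeasurableSpace.comap_comp]
    congr 1
    exact MeasurableSpace.comap_id.symm
  rw [h] at hA
  exact hA

/-- The running infimum is measurable at the terminal time. -/
lemma aux_runInf {Ω : Type*} {m0 : MeasurableSpace Ω} (F : Filtration ℝ≥0 m0)
    (X : ℝ≥0 → Ω → ℝ) (hX : Adapted F X) (hc : ∀ ω, Continuous fun s => X s ω) (θ : ℝ≥0) :
    Measurable[F θ] (runInf X θ) := by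
  obtain ⟨S, hSc, hSd⟩ := TopologicalSpace.exists_countable_dense (Set.Icc (0 : ℝ≥0) θ)
  have : runInf X θ = fun ω => ⨅ s : S, X s.1.1 ω := by
    funext ω
    exact (hSd.ciInf' ((hc ω).comp continuous_subtype_val)).symm
  rw [this]
  have : Countable S := hSc
  refine Measurable.iInf fun s => ?_
  exact (hX s.1.1).mono (F.mono s.1.2.2) le_rfl

/-- Existence of parametrised conditional expectations. -/
def AuxGood {Ω : Type*} (m : MeasurableSpace Ω) {m0 : MeasurableSpace Ω} (P : Measure Ω)
    (h : Ω × ℝ → ℝ≥0∞) : Prop :=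
  ∃ V : Ω × ℝ → ℝ≥0∞, Measurable[m.prod inferInstance] V ∧
    ∀ x, ∀ A, MeasurableSet[m] A → ∫⁻ ω in A, V (ω, x) ∂P = ∫⁻ ω in A, h (ω, x) ∂P

lemma aux_good_set {Ω : Type*} (m : MeasurableSpace Ω) {m0 : MeasurableSpace Ω} (P : Measure Ω)
    [IsProbabilityMeasure P] (hm : m ≤ m0) (S : Set (Ω × ℝ)) (hS : MeasurableSet S) :
    AuxGood m P (S.indicator 1) := by
  induction S, hS using MeasurableSpace.induction_on_inter generateFrom_prod.symm
    isPiSystem_prod with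
  | empty => exact ⟨fun _ => 0, measurable_const, by simp⟩
  | basic S hS =>
    obtain ⟨A, hA, B, hB, rfl⟩ := hS
    have hB : MeasurableSet B := hB
    refine ⟨fun q => B.indicator 1 q.2 * P⁻[A.indicator 1|m] q.1, ?_, ?_⟩
    · refine Measurable.mul (m := m.prod inferInstance) ?_ ?_
      · exact (measurable_one.indicator hB).comp (@measurable_snd _ _ m _)
      · exact (measurable_condLExp m P _).comp (@measurable_fst _ _ m _)
    · intro x C hC
      by_cases hx : x ∈ B
      · simp only [hx, indicator_of_mem, Pi.one_apply, one_mul]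
        rw [setLIntegral_condLExp hm P _ hC]
        refine lintegral_congr fun ω => ?_
        simp [Set.indicator, hx]
      · simp [hx, Set.indicator]
  | compl S hS ih =>
    obtain ⟨V, hV, hVi⟩ := ih
    refine ⟨fun q => 1 - V q, ?_, ?_⟩
    · exact Measurable.const_sub hV 1
    · intro x A hA
      have hVx : Measurable[m] fun ω => V (ω, x) := aux_section hV x
      have hle : (fun ω => V (ω, x)) ≤ᵐ[P] fun _ => 1 := by
        refine ae_le_of_ae_le_trim (hm := hm) ?_
        refine ae_le_of_forall_setLIntegral_le_of_sigmaFinite hVx fun s hs _ => ?_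
        rw [setLIntegral_trim hm hVx hs, setLIntegral_trim hm measurable_const hs, hVi x s hs]
        refine lintegral_mono fun ω => ?_
        exact Set.indicator_le (fun _ _ => le_rfl) _
      have e : ∀ ω, Sᶜ.indicator (1 : Ω × ℝ → ℝ≥0∞) (ω, x) = 1 - S.indicator 1 (ω, x) := by
        intro ω
        by_cases h : (ω, x) ∈ S <;> simp [h]
      simp_rw [e]
      have hfin : ∫⁻ ω in A, S.indicator (1 : Ω × ℝ → ℝ≥0∞) (ω, x) ∂P ≠ ∞ := by
        refine ne_of_lt (lt_of_le_of_lt (lintegral_mono (g := fun _ => 1) fun ω =>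
          Set.indicator_le (fun _ _ => le_rfl) _) ?_)
        simp
      rw [lintegral_sub (hVx.mono hm le_rfl) (by rw [hVi x A hA]; exact hfin)
        (ae_restrict_of_ae hle), lintegral_sub
        (f := fun _ => 1) (aux_section (measurable_one.indicator hS) x) hfin (ae_of_all _ fun ω =>
          Set.indicator_le (fun _ _ => le_rfl) _), hVi x A hA]
  | iUnion f hd hf ih =>
    choose V hV hVi using ih
    refine ⟨fun q => ∑' n, V n q, ?_, ?_⟩
    · exact aux_tsum hV
    · intro x A hA
      have e : ∀ ω, (⋃ i, f i).indicator (1 : Ω × ℝ → ℝ≥0∞) (ω, x)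
          = ∑' n, (f n).indicator 1 (ω, x) := by
        intro ω
        by_cases h : (ω, x) ∈ ⋃ i, f i
        · obtain ⟨i, hi⟩ := mem_iUnion.1 h
          rw [tsum_eq_single i, indicator_of_mem h, indicator_of_mem hi]
          intro j hj
          exact indicator_of_notMem (fun hj' => (Set.disjoint_left.1 (hd hj) hj' hi).elim) _
        · rw [indicator_of_notMem h]
          symm
          refine ENNReal.tsum_eq_zero.2 fun i => indicator_of_notMem (fun hi => h ?_) _
          exact mem_iUnion.2 ⟨i, hi⟩
      simp_rw [e]
      rw [lintegral_tsum, lintegral_tsum]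
      · exact tsum_congr fun n => hVi n x A hA
      · exact fun n => (aux_section (measurable_one.indicator (hf n)) x).aemeasurable
      · exact fun n => ((aux_section (hV n) x).mono hm le_rfl).aemeasurable

lemma aux_good_simple {Ω : Type*} (m : MeasurableSpace Ω) {m0 : MeasurableSpace Ω} (P : Measure Ω)
    [IsProbabilityMeasure P] (hm : m ≤ m0)
    (h : SimpleFunc (Ω × ℝ) ℝ≥0) : AuxGood m P (fun q => (h q : ℝ≥0∞)) := by
  induction h using SimpleFunc.induction with
  | const c hs =>
    rename_i S
    obtain ⟨V, hV, hVi⟩ := aux_good_set m P hm S hs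
    refine ⟨fun q => c * V q, Measurable.const_mul hV _, fun x A hA => ?_⟩
    rw [lintegral_const_mul _ ((aux_section hV x).mono hm le_rfl), hVi x A hA,
      ← lintegral_const_mul _ (aux_section (measurable_one.indicator hs) x)]
    refine lintegral_congr fun ω => ?_
    by_cases hω : (ω, x) ∈ S <;> simp [hω]
  | add hd hf hg =>
    rename_i f g
    obtain ⟨V, hV, hVi⟩ := hf
    obtain ⟨W, hW, hWi⟩ := hg
    refine ⟨fun q => V q + W q, Measurable.add hV hW, fun x A hA => ?_⟩
    simp only [SimpleFunc.coe_add, Pi.add_apply, ENNReal.coe_add]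
    rw [lintegral_add_left ((aux_section hV x).mono hm le_rfl), lintegral_add_left
      (aux_section f.measurable.coe_nnreal_ennreal x), hVi x A hA, hWi x A hA]

lemma aux_good {Ω : Type*} (m : MeasurableSpace Ω) {m0 : MeasurableSpace Ω} (P : Measure Ω)
    [IsProbabilityMeasure P] (hm : m ≤ m0) (h : Ω × ℝ → ℝ≥0∞) (hh : Measurable h) :
    AuxGood m P h := by
  have := fun n => aux_good_simple m P hm (SimpleFunc.eapproxDiff h n)
  choose V hV hVi using this
  refine ⟨fun q => ∑' n, V n q, aux_tsum hV, fun x A hA => ?_⟩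
  simp_rw [← SimpleFunc.tsum_eapproxDiff h hh]
  rw [lintegral_tsum, lintegral_tsum]
  · exact tsum_congr fun n => hVi n x A hA
  · exact fun n => (aux_section
      (SimpleFunc.eapproxDiff h n).measurable.coe_nnreal_ennreal x).aemeasurable
  · exact fun n => ((aux_section (hV n) x).mono hm le_rfl).aemeasurable

/-- Characterisation of the conditional expectation of a nonnegative function by lower
integrals. -/
lemma aux_condExp {Ω : Type*} (m : MeasurableSpace Ω) {m0 : MeasurableSpace Ω} (P : Measure Ω)
    [IsProbabilityMeasure P] (hm : m ≤ m0) (f g : Ω → ℝ) (hf : Integrable f P)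
    (hf0 : 0 ≤ᵐ[P] f) (hg : Measurable[m] g) (hg0 : 0 ≤ᵐ[P] g)
    (h : ∀ A, MeasurableSet[m] A →
      ∫⁻ ω in A, ENNReal.ofReal (g ω) ∂P = ∫⁻ ω in A, ENNReal.ofReal (f ω) ∂P) :
    g =ᵐ[P] P[f|m] := by
  have hg' : AEStronglyMeasurable g P := (hg.mono hm le_rfl).aestronglyMeasurable
  have hgi : Integrable g P := by
    refine ⟨hg', ?_⟩
    rw [hasFiniteIntegral_iff_ofReal hg0]
    have := h univ MeasurableSet.univ
    simp only [Measure.restrict_univ] at this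
    rw [this]
    exact (hasFiniteIntegral_iff_ofReal hf0).1 hf.2
  refine ae_eq_condExp_of_forall_setIntegral_eq hm hf (fun s _ _ => hgi.integrableOn)
    (fun s hs _ => ?_) hg.stronglyMeasurable.aestronglyMeasurable
  rw [integral_eq_lintegral_of_nonneg_ae (ae_restrict_of_ae hg0) hg'.restrict,
    integral_eq_lintegral_of_nonneg_ae (ae_restrict_of_ae hf0) hf.1.restrict, h s hs]

/-- Law of `(ω, L ω)` on `m ⊗ B(ℝ)` under the density hypothesis. -/
lemma aux_key {Ω : Type*} (m : MeasurableSpace Ω) {m0 : MeasurableSpace Ω} (P : Measure Ω)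
    [IsProbabilityMeasure P] (hm : m ≤ m0) (L : Ω → ℝ) (hL : Measurable L)
    (p : ℝ → Ω → ℝ) (hp0 : ∀ x ω, 0 ≤ p x ω)
    (hp : Measurable[m.prod inferInstance] fun q : Ω × ℝ => p q.2 q.1)
    (hd : ∀ (f : ℝ → ℝ), Measurable f → (∃ C, ∀ x, |f x| ≤ C) →
      (P[fun ω => f (L ω)|m]) =ᵐ[P] fun ω => ∫ x, f x * p x ω ∂(P.map L))
    (g : Ω × ℝ → ℝ≥0∞) (hg : Measurable[m.prod inferInstance] g) :
    ∫⁻ ω, g (ω, L ω) ∂P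
      = ∫⁻ x, ∫⁻ ω, ENNReal.ofReal (p x ω) * g (ω, x) ∂P ∂(P.map L) := by
  have hpr : IsProbabilityMeasure (P.map L) := Measure.isProbabilityMeasure_map hL.aemeasurable
  have hle := aux_prod_le hm
  have hp' : Measurable fun q : Ω × ℝ => ENNReal.ofReal (p q.2 q.1) :=
    (hp.mono hle le_rfl).ennreal_ofReal
  have hgr : Measurable fun ω => (ω, L ω) := measurable_id.prodMk hL
  have hint : ∀ᵐ ω ∂P, Integrable (fun x => p x ω) (P.map L) := by
    have h1 := hd (fun _ => 1) measurable_const ⟨1, by simp⟩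
    rw [condExp_const hm] at h1
    filter_upwards [h1] with ω hω
    by_contra hcon
    simp only [one_mul] at hω
    rw [integral_undef hcon] at hω
    exact one_ne_zero hω
  have hrect : ∀ A, MeasurableSet[m] A → ∀ B, MeasurableSet B →
      P.map (fun ω => (ω, L ω)) (A ×ˢ B)
       = ((P.prod (P.map L)).withDensity fun q => ENNReal.ofReal (p q.2 q.1)) (A ×ˢ B) := by
    intro A hA B hB
    have hA' := hm A hA
    rw [Measure.map_apply hgr (hA'.prod hB), withDensity_apply _ (hA'.prod hB),
      ← Measure.prod_restrict, lintegral_prod _ hp'.aemeasurable]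
    have h1 := hd (B.indicator 1) (measurable_one.indicator hB)
      ⟨1, fun x => by by_cases hx : x ∈ B <;> simp [hx]⟩
    have hBi : Integrable (fun ω => B.indicator (1 : ℝ → ℝ) (L ω)) P := by
      refine Integrable.of_bound ((measurable_one.indicator hB).comp hL).aestronglyMeasurable 1
        (ae_of_all _ fun ω => ?_)
      by_cases hx : L ω ∈ B <;> simp [hx]
    have h2 : ∀ᵐ ω ∂P, ∫⁻ x in B, ENNReal.ofReal (p x ω) ∂(P.map L)
        = ENNReal.ofReal ((P[fun ω => B.indicator (1 : ℝ → ℝ) (L ω)|m]) ω) := by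
      filter_upwards [h1, hint] with ω hω hi
      rw [hω, ← ofReal_integral_eq_lintegral_ofReal hi.integrableOn
        (ae_of_all _ fun x => hp0 x ω), ← integral_indicator hB]
      congr 2
      funext x
      by_cases hx : x ∈ B <;> simp [hx]
    have h3 : 0 ≤ᵐ[P] P[fun ω => B.indicator (1 : ℝ → ℝ) (L ω)|m] :=
      condExp_nonneg (ae_of_all _ fun ω => Set.indicator_nonneg (by simp) _)
    rw [lintegral_congr_ae (ae_restrict_of_ae h2), ← ofReal_integral_eq_lintegral_ofReal
      integrable_condExp.integrableOn (ae_restrict_of_ae h3), setIntegral_condExp hm hBi hA]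
    have h4 : (fun ω => B.indicator (1 : ℝ → ℝ) (L ω)) = (L ⁻¹' B).indicator 1 := by
      funext ω
      by_cases hx : L ω ∈ B <;> simp [hx]
    rw [h4, integral_indicator_one (hL hB)]
    rw [measureReal_restrict_apply (hL hB), ofReal_measureReal]
    congr 1
    ext ω
    simp [and_comm]
  have huniv : P.map (fun ω => (ω, L ω)) univ
       = ((P.prod (P.map L)).withDensity fun q => ENNReal.ofReal (p q.2 q.1)) univ := by
    have := hrect univ MeasurableSet.univ univ MeasurableSet.univ
    rwa [univ_prod_univ] at this
  have hprob : IsProbabilityMeasure (P.map (fun ω => (ω, L ω))) :=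
    Measure.isProbabilityMeasure_map hgr.aemeasurable
  have hmeas : (P.map (fun ω => (ω, L ω))).trim hle
      = ((P.prod (P.map L)).withDensity fun q => ENNReal.ofReal (p q.2 q.1)).trim hle := by
    refine @ext_of_generate_finite _ (m.prod inferInstance) _ _ _
      (@generateFrom_prod _ _ m _).symm (@isPiSystem_prod _ _ m _) _ ?_ ?_
    · rintro _ ⟨A, hA, B, hB, rfl⟩
      have hAB : MeasurableSet[m.prod inferInstance] (A ×ˢ B) := @MeasurableSet.prod _ _ m _ _ _ hA hB
      rw [trim_measurableSet_eq hle hAB, trim_measurableSet_eq hle hAB]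
      exact hrect A hA B hB
    · rw [trim_measurableSet_eq hle MeasurableSet.univ, trim_measurableSet_eq hle MeasurableSet.univ]
      exact huniv
  have hg' : Measurable g := hg.mono hle le_rfl
  calc ∫⁻ ω, g (ω, L ω) ∂P = ∫⁻ q, g q ∂(P.map (fun ω => (ω, L ω))) := by
        rw [lintegral_map hg' hgr]
    _ = ∫⁻ q, g q ∂((P.prod (P.map L)).withDensity fun q => ENNReal.ofReal (p q.2 q.1)) := by
        rw [← lintegral_trim hle hg, hmeas, lintegral_trim hle hg]
    _ = _ := by
        rw [lintegral_withDensity_eq_lintegral_mul _ hp' hg',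
          lintegral_prod_symm' _ (hp'.mul hg')]
        rfl

lemma aux_lt {α : Type*} {m : MeasurableSpace α} {f g : α → ℝ} (hf : Measurable f)
    (hg : Measurable g) : MeasurableSet {q | f q < g q} :=
  measurableSet_lt hf hg

lemma aux_ind {α : Type*} {m : MeasurableSpace α} {u : α → ℝ≥0∞} {T : Set α} (hu : Measurable u)
    (hT : MeasurableSet T) : Measurable (T.indicator u) :=
  hu.indicator hT

/-- **Proposition 3.1.** Under Jacod's density hypothesis, for all `0 ≤ t ≤ θ` and every
bounded nonnegative `F_θ ⊗ B(ℝ)`-measurable function `φ_θ`, there exists an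
`F_t ⊗ B(ℝ)`-measurable function `v` such that for `P^L`-a.e. `x`, `v(·,x)` is a version of
`E_P[φ_θ(·,x) p_θ(x) 1_{X*_θ > x} | F_t]`; and for every such `v`, `P`-a.s.,
`E_P[φ_θ(·,L) 1_{τ > θ} | G^M_t] = v(·,L)/p_t(L)`. -/
theorem full_information_pricing_kernel
    {Ω : Type*} [m0 : MeasurableSpace Ω] {P : Measure Ω} [IsProbabilityMeasure P]
    (F : Filtration ℝ≥0 m0)
    (X : ℝ≥0 → Ω → ℝ) (hX_adapted : Adapted F X)
    (hX_cont : ∀ ω, Continuous fun s => X s ω)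
    (L : Ω → ℝ) (hL : Measurable L)
    (hX0 : ∀ᵐ ω ∂P, L ω < X 0 ω)
    (τ : Ω → ℝ≥0)
    (hτ : ∀ (θ : ℝ≥0) (ω : Ω), θ < τ ω ↔ L ω < runInf X θ ω)
    -- Jacod's density hypothesis
    (p : ℝ≥0 → ℝ → Ω → ℝ)
    (hp_nonneg : ∀ t x ω, 0 ≤ p t x ω)
    (hp_meas : ∀ t, Measurable[(F t).prod inferInstance] fun q : Ω × ℝ => p t q.2 q.1)
    (hp_pos : ∀ t, ∀ᵐ ω ∂P, 0 < p t (L ω) ω)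
    (hp_density : ∀ (t : ℝ≥0) (f : ℝ → ℝ), Measurable f → (∃ C, ∀ x, |f x| ≤ C) →
      (P[fun ω => f (L ω)|F t]) =ᵐ[P] fun ω => ∫ x, f x * p t x ω ∂(P.map L))
    -- times and payoff
    (t θ : ℝ≥0) (htθ : t ≤ θ)
    (φ : Ω × ℝ → ℝ)
    (hφ_meas : Measurable[(F θ).prod inferInstance] φ)
    (hφ_nonneg : ∀ q, 0 ≤ φ q)
    (hφ_bdd : ∃ C, ∀ q, |φ q| ≤ C) :
    (∃ v : Ω × ℝ → ℝ, Measurable[(F t).prod inferInstance] v ∧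
      ∀ᵐ x ∂(P.map L), (fun ω => v (ω, x)) =ᵐ[P]
        P[fun ω => φ (ω, x) * p θ x ω * (if x < runInf X θ ω then 1 else 0)|F t]) ∧
    ∀ v : Ω × ℝ → ℝ, Measurable[(F t).prod inferInstance] v →
      (∀ᵐ x ∂(P.map L), (fun ω => v (ω, x)) =ᵐ[P]
        P[fun ω => φ (ω, x) * p θ x ω * (if x < runInf X θ ω then 1 else 0)|F t]) →
      (P[fun ω => φ (ω, L ω) *
          (if θ < τ ω then 1 else 0)|F t ⊔ MeasurableSpace.comap L inferInstance])
        =ᵐ[P] fun ω => v (ω, L ω) / p t (L ω) ω := by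
  obtain ⟨C, hC⟩ := hφ_bdd
  have hmt := F.le t
  have hmθ := F.le θ
  have hlet := aux_prod_le hmt
  have hleθ := aux_prod_le hmθ
  -- the payoff with the survival indicator
  set k : Ω × ℝ → ℝ := fun q => φ q * (if q.2 < runInf X θ q.1 then 1 else 0) with hk_def
  have hk : Measurable[(F θ).prod inferInstance] k := by
    have hS : MeasurableSet[(F θ).prod inferInstance] {q : Ω × ℝ | q.2 < runInf X θ q.1} :=
      aux_lt (@measurable_snd _ _ (F θ) _)
        ((aux_runInf F X hX_adapted hX_cont θ).comp (@measurable_fst _ _ (F θ) _))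
    exact Measurable.mul hφ_meas (Measurable.ite hS measurable_const measurable_const)
  have hk0 : ∀ q, 0 ≤ k q := fun q => mul_nonneg (hφ_nonneg q) (by split_ifs <;> simp)
  have hkC : ∀ q, k q ≤ C := by
    intro q
    have h1 := hC q
    rw [abs_of_nonneg (hφ_nonneg q)] at h1
    have h2 := hφ_nonneg q
    simp only [hk_def]
    split_ifs
    · simpa using h1
    · simpa using h2.trans h1
  have hh : ∀ x, (fun ω => φ (ω, x) * p θ x ω * (if x < runInf X θ ω then (1 : ℝ) else 0))
      = fun ω => p θ x ω * k (ω, x) := by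
    intro x
    funext ω
    simp only [hk_def]
    ring
  simp_rw [hh]
  have hf : (fun ω => φ (ω, L ω) * (if θ < τ ω then (1 : ℝ) else 0)) = fun ω => k (ω, L ω) := by
    funext ω
    simp only [hk_def, hτ θ ω]
  rw [hf]
  have hkeyθ := aux_key (F θ) P hmθ L hL (p θ) (hp_nonneg θ) (hp_meas θ) (hp_density θ)
  have hkeyt := aux_key (F t) P hmt L hL (p t) (hp_nonneg t) (hp_meas t) (hp_density t)
  have hpk : Measurable[(F θ).prod inferInstance] fun q : Ω × ℝ => p θ q.2 q.1 * k q :=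
    Measurable.mul (hp_meas θ) hk
  have hpk' : Measurable fun q : Ω × ℝ => p θ q.2 q.1 * k q := hpk.mono hleθ le_rfl
  have hpk0 : ∀ x ω, 0 ≤ p θ x ω * k (ω, x) := fun x ω => mul_nonneg (hp_nonneg _ _ _) (hk0 _)
  -- integrability of the sections
  have hint : ∀ᵐ x ∂(P.map L), Integrable (fun ω => p θ x ω * k (ω, x)) P := by
    have hfin : ∫⁻ x, ∫⁻ ω, ENNReal.ofReal (p θ x ω * k (ω, x)) ∂P ∂(P.map L) ≠ ∞ := by
      simp_rw [ENNReal.ofReal_mul (hp_nonneg θ _ _)]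
      rw [← hkeyθ (fun q => ENNReal.ofReal (k q)) hk.ennreal_ofReal]
      refine ne_of_lt (lt_of_le_of_lt (lintegral_mono (g := fun _ => ENNReal.ofReal C) fun ω =>
        ENNReal.ofReal_le_ofReal (hkC _)) ?_)
      simp
    have hm : Measurable fun x => ∫⁻ ω, ENNReal.ofReal (p θ x ω * k (ω, x)) ∂P :=
      Measurable.lintegral_prod_left' hpk'.ennreal_ofReal
    filter_upwards [ae_lt_top hm hfin] with x hx
    refine ⟨(aux_section hpk' x).aestronglyMeasurable, ?_⟩
    exact (hasFiniteIntegral_iff_ofReal (ae_of_all _ fun ω => hpk0 x ω)).2 hx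
  refine ⟨?_, ?_⟩
  · obtain ⟨V, hV, hVi⟩ := aux_good (F t) P hmt (fun q => ENNReal.ofReal (p θ q.2 q.1 * k q))
      hpk'.ennreal_ofReal
    refine ⟨fun q => (V q).toReal, Measurable.ennreal_toReal hV, ?_⟩
    filter_upwards [hint] with x hx
    have hVx : Measurable[F t] fun ω => V (ω, x) := aux_section hV x
    have hVx' : Measurable fun ω => V (ω, x) := hVx.mono hmt le_rfl
    have hVfin : ∀ᵐ ω ∂P, V (ω, x) < ∞ := by
      refine ae_lt_top hVx' ?_
      have := hVi x univ MeasurableSet.univ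
      simp only [Measure.restrict_univ] at this
      rw [this]
      exact ((hasFiniteIntegral_iff_ofReal (ae_of_all _ fun ω => hpk0 x ω)).1 hx.2).ne
    refine aux_condExp (F t) P hmt _ _ hx (ae_of_all _ fun ω => hpk0 x ω)
      hVx.ennreal_toReal (ae_of_all _ fun ω => ENNReal.toReal_nonneg) fun A hA => ?_
    rw [← hVi x A hA]
    refine lintegral_congr_ae (ae_restrict_of_ae ?_)
    filter_upwards [hVfin] with ω hω
    exact ENNReal.ofReal_toReal hω.ne
  · intro v hv hvc
    have hv' : Measurable v := hv.mono hlet le_rfl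
    have hpt : Measurable fun q : Ω × ℝ => p t q.2 q.1 := (hp_meas t).mono hlet le_rfl
    -- set integrals of `v`
    have hvi : ∀ᵐ x ∂(P.map L), 0 ≤ᵐ[P] (fun ω => v (ω, x)) ∧ ∀ A, MeasurableSet[F t] A →
        ∫⁻ ω in A, ENNReal.ofReal (v (ω, x)) ∂P
          = ∫⁻ ω in A, ENNReal.ofReal (p θ x ω * k (ω, x)) ∂P := by
      filter_upwards [hint, hvc] with x hx hvx
      have h0 : 0 ≤ᵐ[P] P[fun ω => p θ x ω * k (ω, x)|F t] :=
        condExp_nonneg (ae_of_all _ fun ω => hpk0 x ω)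
      refine ⟨?_, fun A hA => ?_⟩
      · filter_upwards [h0, hvx] with ω h1 h2
        rw [h2]
        exact h1
      · rw [lintegral_congr_ae (g := fun ω =>
          ENNReal.ofReal ((P[fun ω => p θ x ω * k (ω, x)|F t]) ω))
          (ae_restrict_of_ae (by filter_upwards [hvx] with ω h2; rw [h2])),
          ← ofReal_integral_eq_lintegral_ofReal integrable_condExp.integrableOn
            (ae_restrict_of_ae h0),
          ← ofReal_integral_eq_lintegral_ofReal hx.integrableOn
            (ae_of_all _ fun ω => hpk0 x ω), setIntegral_condExp hmt hx hA]
    -- nonnegativity along the graph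
    have hv0 : ∀ᵐ ω ∂P, 0 ≤ v (ω, L ω) := by
      have hN : MeasurableSet[(F t).prod inferInstance] {q : Ω × ℝ | v q < 0} :=
        hv measurableSet_Iio
      have h1 := hkeyt ({q : Ω × ℝ | v q < 0}.indicator 1)
        (aux_ind measurable_const hN)
      have h2 : ∫⁻ x, ∫⁻ ω, ENNReal.ofReal (p t x ω) *
          {q : Ω × ℝ | v q < 0}.indicator 1 (ω, x) ∂P ∂(P.map L) = 0 := by
        rw [lintegral_congr_ae (g := fun _ => 0)]
        · simp
        · filter_upwards [hvi] with x hx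
          rw [lintegral_congr_ae (g := fun _ => 0)]
          · simp
          · filter_upwards [hx.1] with ω hω
            have : (ω, x) ∉ {q : Ω × ℝ | v q < 0} := not_lt.2 hω
            simp [Set.indicator_of_notMem this]
      rw [h2] at h1
      have hgm : Measurable fun ω => {q : Ω × ℝ | v q < 0}.indicator (1 : Ω × ℝ → ℝ≥0∞) (ω, L ω) :=
        (measurable_one.indicator (hlet _ hN)).comp (measurable_id.prodMk hL)
      filter_upwards [(lintegral_eq_zero_iff hgm).1 h1] with ω hω
      by_contra hcon
      have : (ω, L ω) ∈ {q : Ω × ℝ | v q < 0} := not_le.1 hcon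
      rw [Set.indicator_of_mem this] at hω
      exact one_ne_zero hω
    have hG : F t ⊔ MeasurableSpace.comap L inferInstance ≤ m0 :=
      sup_le hmt hL.comap_le
    have hk' : Measurable k := hk.mono hleθ le_rfl
    have hkL : Integrable (fun ω => k (ω, L ω)) P := by
      refine Integrable.of_bound
        (hk'.comp (measurable_id.prodMk hL)).aestronglyMeasurable C (ae_of_all _ fun ω => ?_)
      rw [Real.norm_of_nonneg (hk0 _)]
      exact hkC _
    have hvp : Measurable[(F t).prod inferInstance] fun q : Ω × ℝ => v q / p t q.2 q.1 :=
      Measurable.div hv (hp_meas t)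
    refine Filter.EventuallyEq.symm (aux_condExp _ P hG _ _ hkL (ae_of_all _ fun ω => hk0 _)
      (aux_graph L hvp) ?_ ?_)
    · filter_upwards [hv0] with ω hω
      exact div_nonneg hω (hp_nonneg _ _ _)
    intro A hA
    obtain ⟨S, hS, rfl⟩ := aux_graph_set L hA
    have hPos : MeasurableSet[(F t).prod inferInstance] {q : Ω × ℝ | 0 < p t q.2 q.1} :=
      hp_meas t measurableSet_Ioi
    set T : Set (Ω × ℝ) := S ∩ {q : Ω × ℝ | 0 < p t q.2 q.1} with hT_def
    have hT : MeasurableSet[(F t).prod inferInstance] T := MeasurableSet.inter hS hPos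
    have hTθ : MeasurableSet[(F θ).prod inferInstance] T :=
      aux_prod_le (F.mono htθ) _ hT
    have hTx : ∀ x, MeasurableSet[F t] {ω | (ω, x) ∈ T} := fun x =>
      (@measurable_prodMk_right _ _ (F t) _ x) hT
    have hgraph : ∀ u : Ω × ℝ → ℝ≥0∞,
        ∫⁻ ω in (fun ω => (ω, L ω)) ⁻¹' S, u (ω, L ω) ∂P = ∫⁻ ω, T.indicator u (ω, L ω) ∂P := by
      intro u
      rw [← lintegral_indicator (hG _ hA)]
      refine lintegral_congr_ae ?_
      filter_upwards [hp_pos t] with ω hω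
      by_cases hs : (ω, L ω) ∈ S
      · have hs' : (ω, L ω) ∈ T := ⟨hs, hω⟩
        rw [Set.indicator_of_mem hs']
        exact Set.indicator_of_mem (s := (fun ω => (ω, L ω)) ⁻¹' S) hs _
      · have hs' : (ω, L ω) ∉ T := fun h => hs h.1
        rw [Set.indicator_of_notMem hs']
        exact Set.indicator_of_notMem (s := (fun ω => (ω, L ω)) ⁻¹' S) hs _
    have hsec : ∀ (x : ℝ) (u : Ω → ℝ≥0∞),
        ∫⁻ ω in {ω | (ω, x) ∈ T}, u ω ∂P = ∫⁻ ω, {ω | (ω, x) ∈ T}.indicator u ω ∂P :=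
      fun x u => (lintegral_indicator (hmt _ (hTx x)) u).symm
    rw [hgraph (fun q => ENNReal.ofReal (v q / p t q.2 q.1)),
      hgraph (fun q => ENNReal.ofReal (k q)),
      hkeyt _ (aux_ind hvp.ennreal_ofReal hT),
      hkeyθ _ (aux_ind hk.ennreal_ofReal hTθ)]
    refine lintegral_congr_ae ?_
    filter_upwards [hvi] with x hx
    have h1 := hx.2 _ (hTx x)
    rw [hsec, hsec] at h1
    calc _ = ∫⁻ ω, {ω | (ω, x) ∈ T}.indicator (fun ω => ENNReal.ofReal (v (ω, x))) ω ∂P := by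
          refine lintegral_congr fun ω => ?_
          by_cases hs : (ω, x) ∈ T
          · have hpos : 0 < p t x ω := hs.2
            have hs' : ω ∈ {ω | (ω, x) ∈ T} := hs
            rw [Set.indicator_of_mem hs, Set.indicator_of_mem hs',
              ← ENNReal.ofReal_mul (hp_nonneg _ _ _), mul_div_cancel₀ _ hpos.ne']
          · have hs' : ω ∉ {ω | (ω, x) ∈ T} := hs
            rw [Set.indicator_of_notMem hs, Set.indicator_of_notMem hs', mul_zero]
      _ = _ := h1
      _ = _ := by
          refine lintegral_congr fun ω => ?_
          by_cases hs : (ω, x) ∈ T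
          · have hs' : ω ∈ {ω | (ω, x) ∈ T} := hs
            rw [Set.indicator_of_mem hs, Set.indicator_of_mem hs',
              ← ENNReal.ofReal_mul (hp_nonneg _ _ _)]
          · have hs' : ω ∉ {ω | (ω, x) ∈ T} := hs
            rw [Set.indicator_of_notMem hs, Set.indicator_of_notMem hs', mul_zero]
end
end

section
/- Let t = t_0 < t_1 < ⋯ < t_{n+1} = T and let Z_0, …, Z_n be bounded random variables with Z_i F_{t_i}-measurable. Then, P-almost surely, E_P[ Σ_{i=0}^n Z_i 1_{t_i < τ ≤ t_{i+1}} | G^D_t ] = − 1_{τ > t} · E_P[ Σ_{i=0}^n Z_i (S_{t_{i+1}} − S_{t_i}) | F^D_t ] / E_P[S_t | F^D_t], where the right-hand side is taken to be 0 on {τ ≤ t} (note that P(τ > t, E_P[S_t | F^D_t] = 0) = 0). (The recovery-payment term of the value process formula of Proposition 4.2 for stepwise recovery processes under delayed information.) -/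
open MeasureTheory ProbabilityTheory Set
open scoped NNReal Classical

noncomputable section

/-- The σ-algebra `σ({τ ≤ s} : s ≤ t)` generated by the default observations up to time
`t`. -/
def defaultSigma {Ω : Type*} (τ : Ω → ℝ≥0) (t : ℝ≥0) : MeasurableSpace Ω :=
  MeasurableSpace.generateFrom {A | ∃ s ≤ t, A = {ω | τ ω ≤ s}}

/-- The Azéma supermartingale `S_t = P(τ > t | F_t)` of `τ`. -/
def azema {Ω : Type*} [m0 : MeasurableSpace Ω] (P : Measure Ω) (F : Filtration ℝ≥0 m0)
    (τ : Ω → ℝ≥0) (t : ℝ≥0) : Ω → ℝ :=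
  P[fun ω => if t < τ ω then (1 : ℝ) else 0|F t]

theorem aux_measurable_tau {Ω : Type*} [m0 : MeasurableSpace Ω]
    (X : ℝ≥0 → Ω → ℝ) (hX : ∀ s, Measurable (X s))
    (hX_cont : ∀ ω, Continuous fun s => X s ω)
    (L : Ω → ℝ) (hL : Measurable L) (τ : Ω → ℝ≥0)
    (hτ : ∀ (θ : ℝ≥0) (ω : Ω), θ < τ ω ↔ L ω < runInf X θ ω) : Measurable τ := by
  refine measurable_of_Ioi fun θ => ?_
  have hrun : Measurable (runInf X θ) := by
    obtain ⟨D, hDc, hDd⟩ := TopologicalSpace.exists_countable_dense (Set.Icc (0 : ℝ≥0) θ)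
    have : runInf X θ = fun ω => ⨅ s : D, X s.1.1 ω := by
      funext ω
      have hc : Continuous fun s : Set.Icc (0 : ℝ≥0) θ => X s.1 ω :=
        (hX_cont ω).comp continuous_subtype_val
      exact (hDd.ciInf hc (isCompact_range hc).bddBelow).symm
    rw [this]
    have := hDc.to_subtype
    exact Measurable.iInf fun s => hX _
  have : τ ⁻¹' Ioi θ = {ω | L ω < runInf X θ ω} := by
    ext ω; exact hτ θ ω
  rw [this]
  exact measurableSet_lt hL hrun

theorem aux_trace {Ω : Type*} (m : MeasurableSpace Ω) (τ : Ω → ℝ≥0) (t : ℝ≥0)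
    (B : Set Ω) (hB : MeasurableSet[m ⊔ defaultSigma τ t] B) :
    ∃ C, MeasurableSet[m] C ∧ B ∩ {ω | t < τ ω} = C ∩ {ω | t < τ ω} := by
  have hle : (m ⊔ defaultSigma τ t).comap (Subtype.val : {ω | t < τ ω} → Ω) ≤
      m.comap (Subtype.val : {ω | t < τ ω} → Ω) := by
    rw [MeasurableSpace.comap_le_iff_le_map]
    refine sup_le (MeasurableSpace.comap_le_iff_le_map.1 le_rfl) ?_
    refine MeasurableSpace.generateFrom_le ?_
    rintro A ⟨s, hs, rfl⟩
    refine ⟨∅, MeasurableSet.empty, ?_⟩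
    ext ⟨ω, hω⟩
    have : t < τ ω := hω
    simpa using lt_of_le_of_lt hs this
  obtain ⟨C, hC, hCB⟩ := hle _ ⟨B, hB, rfl⟩
  refine ⟨C, hC, ?_⟩
  have := Subtype.preimage_val_eq_preimage_val_iff {ω | t < τ ω} C B |>.1 hCB
  rw [inter_comm B, inter_comm C]
  exact this.symm

theorem aux_key_s7 {Ω : Type*} {m H m0 : MeasurableSpace Ω} {P : Measure Ω}
    [IsProbabilityMeasure P] (hmH : m ≤ H) (hH : H ≤ m0) (A : Set Ω)
    (hA : MeasurableSet[H] A)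
    (htr : ∀ B, MeasurableSet[H] B → ∃ C, MeasurableSet[m] C ∧ B ∩ A = C ∩ A)
    (Y : Ω → ℝ) (hY : Integrable Y P) (K : ℝ) (hK0 : 0 ≤ K)
    (hK : ∀ ω, |Y ω| ≤ K * A.indicator (fun _ => (1 : ℝ)) ω) :
    P[Y|H] =ᵐ[P] A.indicator
      (fun ω => (P[Y|m]) ω / (P[A.indicator (fun _ => (1 : ℝ))|m]) ω) := by
  have hm : m ≤ m0 := hmH.trans hH
  have hA0 : MeasurableSet A := hH _ hA
  set a : Ω → ℝ := A.indicator (fun _ => (1 : ℝ)) with ha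
  have hai : Integrable a P := (integrable_const (1 : ℝ)).indicator hA0
  set q : Ω → ℝ := fun ω => (P[Y|m]) ω / (P[a|m]) ω with hq
  have hqm : StronglyMeasurable[m] q :=
    (stronglyMeasurable_condExp.measurable.div
      stronglyMeasurable_condExp.measurable).stronglyMeasurable
  have hpos : 0 ≤ᵐ[P] P[a|m] :=
    condExp_nonneg (Filter.Eventually.of_forall fun ω => indicator_nonneg (by simp) ω)
  have hbd : ∀ᵐ ω ∂P, |(P[Y|m]) ω| ≤ K * (P[a|m]) ω := by
    have h1 := abs_condExp_ae_le_condExp_abs (μ := P) (m := m) Y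
    have h2 : condExp m P (|Y|) ≤ᵐ[P] P[K • a|m] :=
      condExp_mono hY.abs (hai.smul K) (Filter.Eventually.of_forall fun ω => hK ω)
    have h3 := condExp_smul (μ := P) K a m
    filter_upwards [h1, h2, h3] with ω h1 h2 h3
    rw [h3] at h2
    exact h1.trans h2
  have hqb : ∀ᵐ ω ∂P, ‖q ω‖ ≤ K := by
    filter_upwards [hbd, hpos] with ω h1 h2
    simp only [hq, Real.norm_eq_abs, abs_div]
    rw [abs_of_nonneg (show 0 ≤ (P[a|m]) ω from h2)]
    exact div_le_of_le_mul₀ h2 hK0 h1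
  have hqi : Integrable q P := Integrable.of_bound (hqm.mono hm).aestronglyMeasurable K hqb
  have hprod : ∀ᵐ ω ∂P, (P[a|m]) ω * q ω = (P[Y|m]) ω := by
    filter_upwards [hbd] with ω h1
    by_cases h0 : (P[a|m]) ω = 0
    · rw [h0, mul_zero] at h1
      rw [h0, zero_mul, abs_nonpos_iff.1 h1]
    · simp only [hq]; field_simp
  have haq : A.indicator q = a * q := by
    ext ω; by_cases h : ω ∈ A <;> simp [ha, h]
  have haqi : Integrable (A.indicator q) P := hqi.indicator hA0
  have hYA : A.indicator Y = Y := by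
    ext ω; by_cases h : ω ∈ A
    · simp [h]
    · have := hK ω
      simp [h, ha] at this
      simp [h, this]
  have hcond : P[A.indicator q|m] =ᵐ[P] P[Y|m] := by
    rw [haq] at haqi ⊢
    filter_upwards [condExp_mul_of_stronglyMeasurable_right hqm haqi hai, hprod] with ω h1 h2
    rw [h1, ← h2]; rfl
  symm
  refine ae_eq_condExp_of_forall_setIntegral_eq hH hY (fun s _ _ => haqi.integrableOn) ?_ ?_
  · intro B hB _
    obtain ⟨C, hC, hBC⟩ := htr B hB
    calc ∫ x in B, A.indicator q x ∂P = ∫ x in C, A.indicator q x ∂P := by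
          rw [setIntegral_indicator hA0, setIntegral_indicator hA0, hBC]
      _ = ∫ x in C, (P[A.indicator q|m]) x ∂P := (setIntegral_condExp hm haqi hC).symm
      _ = ∫ x in C, (P[Y|m]) x ∂P :=
          integral_congr_ae (ae_restrict_of_ae hcond)
      _ = ∫ x in C, Y x ∂P := setIntegral_condExp hm hY hC
      _ = ∫ x in B, Y x ∂P := by
          rw [← hYA, setIntegral_indicator hA0, setIntegral_indicator hA0, hBC]
  · exact ((hqm.mono hmH).indicator hA).aestronglyMeasurable

/-- One-step identity `E[Z S_s | G] = E[Z 1_{τ>s} | G]` for `Z` bounded `F_s`-measurable. -/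
theorem aux_pull {Ω : Type*} (G : MeasurableSpace Ω) [m0 : MeasurableSpace Ω] {P : Measure Ω}
    [IsProbabilityMeasure P] (F : Filtration ℝ≥0 m0) (τ : Ω → ℝ≥0) (hτ : Measurable τ)
    (s : ℝ≥0) (hG : G ≤ F s) (Z : Ω → ℝ)
    (hZ : Measurable[F s] Z) (C : ℝ) (hC : ∀ ω, |Z ω| ≤ C) :
    Integrable (fun ω => Z ω * azema P F τ s ω) P ∧
    Integrable (fun ω => Z ω * (if s < τ ω then (1 : ℝ) else 0)) P ∧
    P[fun ω => Z ω * azema P F τ s ω|G] =ᵐ[P]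
      P[fun ω => Z ω * (if s < τ ω then (1 : ℝ) else 0)|G] := by
  have hset : MeasurableSet {ω | s < τ ω} := measurableSet_lt measurable_const hτ
  have hi : Integrable (fun ω => if s < τ ω then (1 : ℝ) else 0) P := by
    refine Integrable.of_bound (C := 1)
      (Measurable.ite hset measurable_const measurable_const).aestronglyMeasurable
      (Filter.Eventually.of_forall fun ω => ?_)
    split_ifs <;> simp
  have hZ0 : AEStronglyMeasurable Z P := (hZ.mono (F.le s) le_rfl).aestronglyMeasurable
  have h1 : Integrable (fun ω => Z ω * azema P F τ s ω) P :=
    Integrable.bdd_mul (c := C) integrable_condExp hZ0 (Filter.Eventually.of_forall hC)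
  have h2 : Integrable (fun ω => Z ω * (if s < τ ω then (1 : ℝ) else 0)) P :=
    Integrable.bdd_mul (c := C) hi hZ0 (Filter.Eventually.of_forall hC)
  refine ⟨h1, h2, ?_⟩
  have hp : P[fun ω => Z ω * (if s < τ ω then (1 : ℝ) else 0)|F s] =ᵐ[P]
      fun ω => Z ω * azema P F τ s ω :=
    condExp_mul_of_stronglyMeasurable_left hZ.stronglyMeasurable h2 hi
  exact (condExp_congr_ae hp).symm.trans (condExp_condExp_of_le hG (F.le s))

/-- **Recovery-payment term of Proposition 4.2.** For a partition
`t = t_0 < t_1 < ⋯ < t_{n+1} = T` and bounded `F_{t_i}`-measurable `Z_i`, `P`-a.s.,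
`E_P[Σ_i Z_i 1_{t_i < τ ≤ t_{i+1}} | G^D_t] = − 1_{τ > t} E_P[Σ_i Z_i (S_{t_{i+1}} −
S_{t_i}) | F^D_t] / E_P[S_t | F^D_t]` (the right-hand side being `0` on `{τ ≤ t}`, and
`P(τ > t, E[S_t|F^D_t] = 0) = 0`). -/
theorem delayed_information_recovery_term
    {Ω : Type*} [m0 : MeasurableSpace Ω] {P : Measure Ω} [IsProbabilityMeasure P]
    (F : Filtration ℝ≥0 m0)
    (X : ℝ≥0 → Ω → ℝ) (hX_adapted : Adapted F X)
    (hX_cont : ∀ ω, Continuous fun s => X s ω)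
    (L : Ω → ℝ) (hL : Measurable L)
    (hX0 : ∀ᵐ ω ∂P, L ω < X 0 ω)
    (τ : Ω → ℝ≥0)
    (hτ : ∀ (θ : ℝ≥0) (ω : Ω), θ < τ ω ↔ L ω < runInf X θ ω)
    -- the delayed default-free filtration, a sub-filtration of `F`
    (FD : Filtration ℝ≥0 m0) (hFD : ∀ s, FD s ≤ F s)
    -- the partition `t = t_0 < t_1 < ⋯ < t_{n+1} = T` and the stepwise recovery payments
    (n : ℕ) (ts : Fin (n + 2) → ℝ≥0) (hts : StrictMono ts)
    (t T : ℝ≥0) (hts0 : ts 0 = t) (htsT : ts (Fin.last (n + 1)) = T)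
    (Z : Fin (n + 1) → Ω → ℝ)
    (hZ_meas : ∀ i, Measurable[F (ts i.castSucc)] (Z i))
    (hZ_bdd : ∀ i, ∃ C, ∀ ω, |Z i ω| ≤ C) :
    P {ω | t < τ ω ∧ (P[azema P F τ t|FD t]) ω = 0} = 0 ∧
    (P[fun ω => ∑ i : Fin (n + 1),
        Z i ω * (if ts i.castSucc < τ ω ∧ τ ω ≤ ts i.succ then 1 else 0)|
          FD t ⊔ defaultSigma τ t]) =ᵐ[P]
      fun ω => if t < τ ω then
        -((P[fun ω' => ∑ i : Fin (n + 1),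
            Z i ω' * (azema P F τ (ts i.succ) ω' - azema P F τ (ts i.castSucc) ω')|FD t]) ω
          / (P[azema P F τ t|FD t]) ω)
      else 0 := by
  have hτm : Measurable τ :=
    aux_measurable_tau X (fun s => (hX_adapted s).mono (F.le s) le_rfl) hX_cont L hL τ hτ
  have hA0 : MeasurableSet {ω | t < τ ω} := measurableSet_lt measurable_const hτm
  have hind : (fun ω => if t < τ ω then (1 : ℝ) else 0) =
      {ω | t < τ ω}.indicator (fun _ => (1 : ℝ)) := by
    ext ω; simp [indicator_apply]
  have hS : P[azema P F τ t|FD t] =ᵐ[P]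
      P[{ω | t < τ ω}.indicator (fun _ => (1 : ℝ))|FD t] := by
    rw [← hind]
    exact condExp_condExp_of_le (hFD t) (F.le t)
  have hai : Integrable ({ω | t < τ ω}.indicator (fun _ => (1 : ℝ))) P :=
    (integrable_const (1 : ℝ)).indicator hA0
  have hmono : Monotone ts := hts.monotone
  have htle : ∀ i, t ≤ ts i := fun i => hts0 ▸ hmono (Fin.zero_le i)
  refine ⟨?_, ?_⟩
  · set b := P[{ω | t < τ ω}.indicator (fun _ => (1 : ℝ))|FD t] with hb
    have hN : MeasurableSet[FD t] {ω | b ω = 0} :=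
      stronglyMeasurable_condExp.measurable (measurableSet_singleton (0 : ℝ))
    have h1 := setIntegral_condExp (FD.le t) hai hN
    rw [setIntegral_indicator hA0,
      setIntegral_congr_fun (g := fun _ => (0 : ℝ)) ((FD.le t) _ hN) (fun x hx => hx)] at h1
    simp only [integral_zero, integral_const, smul_eq_mul, mul_one, MeasurableSet.univ,
      measureReal_restrict_apply, univ_inter] at h1
    have h2 : P ({ω | b ω = 0} ∩ {ω | t < τ ω}) = 0 :=
      (measureReal_eq_zero_iff).1 h1.symm
    refine (measure_congr ?_).trans h2
    filter_upwards [hS] with ω hω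
    apply propext
    change (t < τ ω ∧ (P[azema P F τ t|FD t]) ω = 0) ↔ (b ω = 0 ∧ t < τ ω)
    rw [hω, and_comm]
  · choose C hC using hZ_bdd
    have hCK : ∀ i ω, |Z i ω| ≤ |C i| := fun i ω => (hC i ω).trans (le_abs_self _)
    set Y : Ω → ℝ := fun ω => ∑ i : Fin (n + 1),
        Z i ω * (if ts i.castSucc < τ ω ∧ τ ω ≤ ts i.succ then 1 else 0) with hY
    have hsplit : ∀ (i : Fin (n + 1)) ω,
        Z i ω * (if ts i.castSucc < τ ω ∧ τ ω ≤ ts i.succ then 1 else 0) =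
        Z i ω * (if ts i.castSucc < τ ω then (1 : ℝ) else 0)
          - Z i ω * (if ts i.succ < τ ω then (1 : ℝ) else 0) := by
      intro i ω
      have hlt : ts i.castSucc < ts i.succ := hts Fin.castSucc_lt_succ
      by_cases h1 : ts i.succ < τ ω
      · simp [h1, hlt.trans h1]
      · by_cases h2 : ts i.castSucc < τ ω <;> simp [h1, h2, not_lt.1 h1]
    have pc := fun i : Fin (n + 1) => aux_pull (FD t) (P := P) F τ hτm (ts i.castSucc)
      ((hFD t).trans (F.mono (htle _))) (Z i) (hZ_meas i) _ (hC i)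
    have ps := fun i : Fin (n + 1) => aux_pull (FD t) (P := P) F τ hτm (ts i.succ)
      ((hFD t).trans (F.mono (htle _))) (Z i)
      ((hZ_meas i).mono (F.mono (hts Fin.castSucc_lt_succ).le) le_rfl) _ (hC i)
    have hYsum : Y = ∑ i : Fin (n + 1),
        ((fun ω => Z i ω * (if ts i.castSucc < τ ω then (1 : ℝ) else 0))
          - fun ω => Z i ω * (if ts i.succ < τ ω then (1 : ℝ) else 0)) := by
      ext ω
      simp only [hY, hsplit, Finset.sum_apply, Pi.sub_apply]
    have hWsum : (fun ω' => ∑ i : Fin (n + 1),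
          Z i ω' * (azema P F τ (ts i.succ) ω' - azema P F τ (ts i.castSucc) ω')) =
        ∑ i : Fin (n + 1), ((fun ω => Z i ω * azema P F τ (ts i.succ) ω)
          - fun ω => Z i ω * azema P F τ (ts i.castSucc) ω) := by
      ext ω
      simp only [mul_sub, Finset.sum_apply, Pi.sub_apply]
    have hYi : Integrable Y P := by
      rw [hYsum]
      exact integrable_finsetSum' _ fun i _ => (pc i).2.1.sub (ps i).2.1
    have hYW : ∀ᵐ ω ∂P, (P[Y|FD t]) ω = -(P[fun ω' => ∑ i : Fin (n + 1),
          Z i ω' * (azema P F τ (ts i.succ) ω' - azema P F τ (ts i.castSucc) ω')|FD t]) ω := by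
      rw [hYsum, hWsum]
      have e1 := condExp_finsetSum (μ := P) (s := Finset.univ)
        (fun (i : Fin (n + 1)) _ => (pc i).2.1.sub (ps i).2.1) (FD t)
      have e2 := condExp_finsetSum (μ := P) (s := Finset.univ)
        (fun (i : Fin (n + 1)) _ => (ps i).1.sub (pc i).1) (FD t)
      have e3 := ae_all_iff.2 fun i => condExp_sub (pc i).2.1 (ps i).2.1 (FD t)
      have e4 := ae_all_iff.2 fun i => condExp_sub (ps i).1 (pc i).1 (FD t)
      have e5 := ae_all_iff.2 fun i => (pc i).2.2
      have e6 := ae_all_iff.2 fun i => (ps i).2.2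
      filter_upwards [e1, e2, e3, e4, e5, e6] with ω e1 e2 e3 e4 e5 e6
      rw [e1, e2, Finset.sum_apply, Finset.sum_apply, ← Finset.sum_neg_distrib]
      refine Finset.sum_congr rfl fun i _ => ?_
      rw [e3, e4, Pi.sub_apply, Pi.sub_apply, e5, e6, neg_sub]
    have hD : defaultSigma τ t ≤ m0 := by
      refine MeasurableSpace.generateFrom_le ?_
      rintro A ⟨s, hs, rfl⟩
      exact measurableSet_le hτm measurable_const
    have hAH : MeasurableSet[FD t ⊔ defaultSigma τ t] {ω | t < τ ω} := by
      have h1 : MeasurableSet[defaultSigma τ t] {ω | τ ω ≤ t} :=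
        MeasurableSpace.measurableSet_generateFrom ⟨t, le_rfl, rfl⟩
      have h2 := (le_sup_right (a := FD t) _ h1).compl
      convert h2 using 1
      ext ω; simp
    have key := aux_key_s7 (P := P) (m := FD t) (H := FD t ⊔ defaultSigma τ t) le_sup_left
      (sup_le (FD.le t) hD) {ω | t < τ ω} hAH (aux_trace (FD t) τ t) Y hYi
      (∑ i, |C i|) (Finset.sum_nonneg fun i _ => abs_nonneg _) (by
        intro ω
        by_cases h : t < τ ω
        · have hm : ω ∈ {ω | t < τ ω} := h
          rw [indicator_of_mem hm, mul_one]
          refine (Finset.abs_sum_le_sum_abs _ _).trans (Finset.sum_le_sum fun i _ => ?_)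
          rw [abs_mul]
          have := hCK i ω
          split_ifs
          · simpa using this
          · simp
        · have hz : Y ω = 0 := by
            refine Finset.sum_eq_zero fun i _ => ?_
            rw [if_neg, mul_zero]
            rintro ⟨h1, -⟩
            exact h ((htle _).trans_lt h1)
          simp [hz, h])
    filter_upwards [key, hYW, hS] with ω h1 h2 h3
    rw [h1, h3]
    simp only [indicator_apply, mem_setOf_eq]
    split_ifs
    · rw [h2, neg_div]
    · rfl
end
end

section
/- Under Jacod's density hypothesis and the noisy-barrier setup, for all 0 ≤ t ≤ θ and every bounded F_θ-measurable random variable φ_θ, let v : Ω × ℝ → ℝ be F_t ⊗ B(ℝ)-measurable and such that for P^L-almost every l, v(·,l) is a version of E_P[φ_θ p_θ(l) 1_{X*_θ > l} | F_t]. Then the random variable D_t := ∫_ℝ p_t(l) q_t(L_t − l) P^L(dl) is P-a.s. strictly positive and, P-almost surely, E_P[φ_θ 1_{τ > θ} | F^I_t] · D_t = ∫_ℝ v(·,l) q_t(L_t − l) P^L(dl). (Second formula of Proposition 5.1.) -/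
open MeasureTheory ProbabilityTheory Set
open scoped NNReal Classical

noncomputable section

/-- The insider's default-free σ-algebra `F^I_t = F_t ∨ σ(L_s = L + ε_s : s ≤ t)`. -/
def insiderSigma {Ω : Type*} [m0 : MeasurableSpace Ω] (F : Filtration ℝ≥0 m0)
    (L : Ω → ℝ) (ε : ℝ≥0 → Ω → ℝ) (t : ℝ≥0) : MeasurableSpace Ω :=
  F t ⊔ ⨆ s ∈ Set.Iic t, MeasurableSpace.comap (fun ω => L ω + ε s ω) inferInstance

section Helpers
open scoped ENNReal

theorem setInt_wd {α : Type*} [MeasurableSpace α] (m : Measure α) (p : α → ℝ) (hp : Measurable p)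
    (hp0 : ∀ a, 0 ≤ p a) (f : α → ℝ) {G : Set α} (hG : MeasurableSet G) :
    ∫ a in G, f a ∂(m.withDensity fun a => ENNReal.ofReal (p a)) = ∫ a in G, p a * f a ∂m := by
  rw [setIntegral_withDensity_eq_setIntegral_toReal_smul (by fun_prop) (by simp) _ hG]
  simp [ENNReal.toReal_ofReal (hp0 _)]

theorem core_lint {Ω E N : Type*} [MeasurableSpace Ω] [MeasurableSpace E] [MeasurableSpace N]
    (P : Measure Ω) [IsProbabilityMeasure P] (Z : Ω → E) (L e : Ω → ℝ) (M : Ω → N)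
    (hZ : Measurable Z) (hL : Measurable L) (he : Measurable e) (hM : Measurable M)
    (p : E × ℝ → ℝ≥0∞) (hp : Measurable p) (q : ℝ → ℝ≥0∞) (hq : Measurable q)
    (hJ : P.map (fun ω => (Z ω, L ω)) = ((P.map Z).prod (P.map L)).withDensity p)
    (hI : P.map (fun ω => ((Z ω, L ω), (e ω, M ω))) =
      (P.map (fun ω => (Z ω, L ω))).prod ((P.map e).prod (P.map M)))
    (hqd : P.map e = volume.withDensity q)
    (w : E × ℝ → ℝ≥0∞) (hw : Measurable w) (g : E × ℝ × N → ℝ≥0∞) (hg : Measurable g) :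
    ∫⁻ ω, w (Z ω, L ω) * g (Z ω, L ω + e ω, M ω) ∂P =
      ∫⁻ x, ∫⁻ y, ∫⁻ n, g (x, y, n) *
        (∫⁻ l, w (x, l) * p (x, l) * q (y - l) ∂(P.map L)) ∂(P.map M) ∂volume ∂(P.map Z) := by
  have := Measure.isProbabilityMeasure_map (μ := P) hL.aemeasurable
  have := Measure.isProbabilityMeasure_map (μ := P) hM.aemeasurable
  have := Measure.isProbabilityMeasure_map (μ := P) he.aemeasurable
  have := Measure.isProbabilityMeasure_map (μ := P) hZ.aemeasurable
  have := Measure.isProbabilityMeasure_map (μ := P) (hZ.prodMk hL).aemeasurable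
  have h1 : ∫⁻ ω, w (Z ω, L ω) * g (Z ω, L ω + e ω, M ω) ∂P =
      ∫⁻ r, w r.1 * g (r.1.1, r.1.2 + r.2.1, r.2.2) ∂(P.map (fun ω => ((Z ω, L ω), (e ω, M ω)))) := by
    rw [lintegral_map (by fun_prop) (by fun_prop)]
  rw [h1, hI, lintegral_prod _ (by fun_prop), hJ,
    lintegral_withDensity_eq_lintegral_mul _ hp (by fun_prop), lintegral_prod _ (by fun_prop)]
  refine lintegral_congr fun x => ?_
  calc _ = ∫⁻ l, ∫⁻ y, ∫⁻ n, g (x, y, n) * (w (x, l) * p (x, l) * q (y - l)) ∂(P.map M) ∂volume ∂(P.map L) := by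
        refine lintegral_congr fun l => ?_
        simp only [Pi.mul_apply]
        rw [lintegral_prod _ (by fun_prop), hqd, lintegral_withDensity_eq_lintegral_mul _ hq (by fun_prop),
          ← lintegral_const_mul _ (by fun_prop), ← lintegral_sub_right_eq_self _ l]
        refine lintegral_congr fun y => ?_
        simp only [Pi.mul_apply]
        rw [← lintegral_const_mul _ (by fun_prop), ← lintegral_const_mul _ (by fun_prop)]
        refine lintegral_congr fun n => ?_
        rw [add_sub_cancel]
        ring
    _ = ∫⁻ y, ∫⁻ l, ∫⁻ n, g (x, y, n) * (w (x, l) * p (x, l) * q (y - l)) ∂(P.map M) ∂(P.map L) := by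
        rw [lintegral_lintegral_swap]
        fun_prop
    _ = _ := by
        refine lintegral_congr fun y => ?_
        rw [lintegral_lintegral_swap (by fun_prop)]
        refine lintegral_congr fun n => ?_
        rw [lintegral_const_mul _ (by fun_prop)]

theorem core_lint' {Ω E N : Type*} [MeasurableSpace Ω] [MeasurableSpace E] [MeasurableSpace N]
    (P : Measure Ω) [IsProbabilityMeasure P] (Z : Ω → E) (L e : Ω → ℝ) (M : Ω → N)
    (hZ : Measurable Z) (hL : Measurable L) (he : Measurable e) (hM : Measurable M)
    (p : E × ℝ → ℝ≥0∞) (hp : Measurable p) (q : ℝ → ℝ≥0∞) (hq : Measurable q)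
    (hJ : P.map (fun ω => (Z ω, L ω)) = ((P.map Z).prod (P.map L)).withDensity p)
    (hI : P.map (fun ω => ((Z ω, L ω), (e ω, M ω))) =
      (P.map (fun ω => (Z ω, L ω))).prod ((P.map e).prod (P.map M)))
    (hqd : P.map e = volume.withDensity q)
    (w : E × ℝ → ℝ≥0∞) (hw : Measurable w) (C : ℝ≥0∞) (hwC : ∀ z, w z ≤ C) :
    (∀ᵐ ω ∂P, (∫⁻ l, p (Z ω, l) * q (L ω + e ω - l) ∂(P.map L)) ≠ 0 ∧
      (∫⁻ l, p (Z ω, l) * q (L ω + e ω - l) ∂(P.map L)) ≠ ∞) ∧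
    ∀ g : E × ℝ × N → ℝ≥0∞, Measurable g →
    ∫⁻ ω, w (Z ω, L ω) * g (Z ω, L ω + e ω, M ω) ∂P =
      ∫⁻ ω, ((∫⁻ l, w (Z ω, l) * p (Z ω, l) * q (L ω + e ω - l) ∂(P.map L)) /
        (∫⁻ l, p (Z ω, l) * q (L ω + e ω - l) ∂(P.map L))) * g (Z ω, L ω + e ω, M ω) ∂P := by
  have := Measure.isProbabilityMeasure_map (μ := P) hL.aemeasurable
  have := Measure.isProbabilityMeasure_map (μ := P) hM.aemeasurable
  have := Measure.isProbabilityMeasure_map (μ := P) he.aemeasurable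
  have := Measure.isProbabilityMeasure_map (μ := P) hZ.aemeasurable
  have key : ∀ w : E × ℝ → ℝ≥0∞, Measurable w → ∀ g : E × ℝ × N → ℝ≥0∞, Measurable g →
      ∫⁻ ω, w (Z ω, L ω) * g (Z ω, L ω + e ω, M ω) ∂P =
      ∫⁻ r, g r * (∫⁻ l, w (r.1, l) * p (r.1, l) * q (r.2.1 - l) ∂(P.map L))
        ∂((P.map Z).prod (volume.prod (P.map M))) := by
    intro w hw g hg
    rw [core_lint P Z L e M hZ hL he hM p hp q hq hJ hI hqd w hw g hg, lintegral_prod _ (by fun_prop)]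
    refine lintegral_congr fun x => ?_
    rw [lintegral_prod _ (by fun_prop)]
  set D : E × ℝ → ℝ≥0∞ := fun z => ∫⁻ l, p (z.1, l) * q (z.2 - l) ∂(P.map L) with hD
  set W : E × ℝ → ℝ≥0∞ := fun z => ∫⁻ l, w (z.1, l) * p (z.1, l) * q (z.2 - l) ∂(P.map L) with hW
  have hDm : Measurable D := by fun_prop
  have hWm : Measurable W := by fun_prop
  have key1 : ∀ g : E × ℝ × N → ℝ≥0∞, Measurable g →
      ∫⁻ ω, g (Z ω, L ω + e ω, M ω) ∂P =
      ∫⁻ r, g r * D (r.1, r.2.1) ∂((P.map Z).prod (volume.prod (P.map M))) := by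
    intro g hg
    have := key (fun _ => 1) measurable_const g hg
    simpa using this
  have hfin : ∀ᵐ r ∂((P.map Z).prod (volume.prod (P.map M))), D (r.1, r.2.1) < ∞ := by
    refine ae_lt_top (by fun_prop) ?_
    have := key1 (fun _ => 1) measurable_const
    simp only [lintegral_one, measure_univ, one_mul] at this
    rw [← this]; simp
  constructor
  · set B : Set (E × ℝ × N) := {r | D (r.1, r.2.1) = 0 ∨ D (r.1, r.2.1) = ∞} with hB
    have hBm : MeasurableSet B :=
      (measurableSet_eq_fun (by fun_prop) measurable_const).union
        (measurableSet_eq_fun (by fun_prop) measurable_const)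
    have h := key1 (B.indicator 1) (measurable_one.indicator hBm)
    have h0 : ∫⁻ r, B.indicator 1 r * D (r.1, r.2.1) ∂((P.map Z).prod (volume.prod (P.map M))) = 0 := by
      rw [lintegral_eq_zero_iff (by fun_prop)]
      filter_upwards [hfin] with r hr
      by_cases hrB : r ∈ B
      · rcases hrB with h | h
        · simp [h]
        · exact absurd h hr.ne
      · simp [hrB]
    have hVm : Measurable (fun ω => (Z ω, L ω + e ω, M ω)) := by fun_prop
    have hVm' : Measurable (fun ω => B.indicator (1 : E × ℝ × N → ℝ≥0∞) (Z ω, L ω + e ω, M ω)) :=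
      (measurable_one.indicator hBm).comp hVm
    rw [h0, lintegral_eq_zero_iff hVm'] at h
    filter_upwards [h] with ω hω
    have : (Z ω, L ω + e ω, M ω) ∉ B := by
      intro hb
      simp [hb] at hω
    simp only [hB, mem_ofPred_eq, not_or] at this
    exact this
  · intro g hg
    have h1 := key w hw g hg
    have h2 := key1 (fun r => W (r.1, r.2.1) / D (r.1, r.2.1) * g r) (by fun_prop)
    have hWD : ∀ z, W z ≤ C * D z := by
      intro z
      simp only [hW, hD]
      rw [← lintegral_const_mul _ (by fun_prop)]
      refine lintegral_mono fun l => ?_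
      rw [mul_assoc]
      gcongr
      exact hwC _
    rw [h1]
    refine Eq.trans ?_ h2.symm
    refine lintegral_congr_ae ?_
    filter_upwards [hfin] with r hr
    change g r * W (r.1, r.2.1) = _
    have : W (r.1, r.2.1) / D (r.1, r.2.1) * D (r.1, r.2.1) = W (r.1, r.2.1) := by
      by_cases h0 : D (r.1, r.2.1) = 0
      · have := hWD (r.1, r.2.1)
        rw [h0, mul_zero] at this
        rw [h0, mul_zero]; exact (le_antisymm this zero_le).symm
      · exact ENNReal.div_mul_cancel h0 hr.ne
    calc _ = g r * (W (r.1, r.2.1) / D (r.1, r.2.1) * D (r.1, r.2.1)) := by rw [this]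
      _ = _ := by ring

theorem core_real {Ω E N : Type*} [MeasurableSpace Ω] [MeasurableSpace E] [MeasurableSpace N]
    (P : Measure Ω) [IsProbabilityMeasure P] (Z : Ω → E) (L e : Ω → ℝ) (M : Ω → N)
    (hZ : Measurable Z) (hL : Measurable L) (he : Measurable e) (hM : Measurable M)
    (p : E × ℝ → ℝ) (hp : Measurable p) (hp0 : ∀ z, 0 ≤ p z)
    (q : ℝ → ℝ) (hq : Measurable q) (hq0 : ∀ z, 0 ≤ q z)
    (hJ : P.map (fun ω => (Z ω, L ω)) =
      ((P.map Z).prod (P.map L)).withDensity fun z => ENNReal.ofReal (p z))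
    (hI : P.map (fun ω => ((Z ω, L ω), (e ω, M ω))) =
      (P.map (fun ω => (Z ω, L ω))).prod ((P.map e).prod (P.map M)))
    (hqd : P.map e = volume.withDensity fun x => ENNReal.ofReal (q x))
    (w : E × ℝ → ℝ) (hw : Measurable w) (C : ℝ) (hwC : ∀ z, |w z| ≤ C) :
    (∀ᵐ ω ∂P, 0 < ∫ l, p (Z ω, l) * q (L ω + e ω - l) ∂(P.map L)) ∧
    ∃ u : E × ℝ → ℝ, Measurable u ∧ (∃ K, ∀ z, |u z| ≤ K) ∧
      (∀ᵐ ω ∂P, u (Z ω, L ω + e ω) * ∫ l, p (Z ω, l) * q (L ω + e ω - l) ∂(P.map L) =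
        ∫ l, w (Z ω, l) * p (Z ω, l) * q (L ω + e ω - l) ∂(P.map L)) ∧
      ∀ S : Set (E × ℝ × N), MeasurableSet S →
        ∫ ω in (fun ω => (Z ω, L ω + e ω, M ω)) ⁻¹' S, w (Z ω, L ω) ∂P =
        ∫ ω in (fun ω => (Z ω, L ω + e ω, M ω)) ⁻¹' S, u (Z ω, L ω + e ω) ∂P := by
  have := Measure.isProbabilityMeasure_map (μ := P) hL.aemeasurable
  have hw0 : ∀ z, 0 ≤ w z + C := fun z => by linarith [(abs_le.mp (hwC z)).1]
  obtain ⟨hA, hB⟩ := core_lint' P Z L e M hZ hL he hM (fun z => ENNReal.ofReal (p z)) (by fun_prop)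
    (fun x => ENNReal.ofReal (q x)) (by fun_prop) hJ hI hqd (fun z => ENNReal.ofReal (w z + C))
    (by fun_prop) (ENNReal.ofReal (2 * C))
    (fun z => ENNReal.ofReal_le_ofReal (by linarith [(abs_le.mp (hwC z)).2]))
  set D : E × ℝ → ℝ≥0∞ := fun z => ∫⁻ l, ENNReal.ofReal (p (z.1, l)) *
    ENNReal.ofReal (q (z.2 - l)) ∂(P.map L) with hD
  set W : E × ℝ → ℝ≥0∞ := fun z => ∫⁻ l, ENNReal.ofReal (w (z.1, l) + C) * ENNReal.ofReal (p (z.1, l)) *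
    ENNReal.ofReal (q (z.2 - l)) ∂(P.map L) with hW
  have hDm : Measurable D := by fun_prop
  have hWm : Measurable W := by fun_prop
  have hWD : ∀ z, W z / D z ≤ ENNReal.ofReal (2 * C) := by
    intro z
    apply ENNReal.div_le_of_le_mul
    simp only [hW, hD]
    rw [← lintegral_const_mul _ (by fun_prop)]
    refine lintegral_mono fun l => ?_
    rw [mul_assoc]
    gcongr
    linarith [(abs_le.mp (hwC (z.1, l))).2]
  have hDr : ∀ z, (∫ l, p (z.1, l) * q (z.2 - l) ∂(P.map L)) = (D z).toReal := by
    intro z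
    rw [integral_eq_lintegral_of_nonneg_ae (ae_of_all _ fun l => mul_nonneg (hp0 _) (hq0 _))
      (by fun_prop)]
    simp only [hD, ENNReal.ofReal_mul (hp0 _)]
  have hWr : ∀ z, (∫ l, (w (z.1, l) + C) * p (z.1, l) * q (z.2 - l) ∂(P.map L)) = (W z).toReal := by
    intro z
    rw [integral_eq_lintegral_of_nonneg_ae (ae_of_all _ fun l =>
      mul_nonneg (mul_nonneg (hw0 _) (hp0 _)) (hq0 _)) (by fun_prop)]
    simp only [hW, ENNReal.ofReal_mul (hw0 _), ENNReal.ofReal_mul (mul_nonneg (hw0 _) (hp0 _))]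
  refine ⟨?_, fun z => (W z / D z).toReal - C, by fun_prop, ⟨|2 * C| + |C|, ?_⟩, ?_, ?_⟩
  · filter_upwards [hA] with ω hω
    rw [hDr (Z ω, L ω + e ω)]
    exact ENNReal.toReal_pos hω.1 hω.2
  · intro z
    refine (abs_sub _ _).trans ?_
    refine add_le_add ?_ le_rfl
    rw [abs_of_nonneg ENNReal.toReal_nonneg]
    refine (ENNReal.toReal_mono ENNReal.ofReal_ne_top (hWD z)).trans ?_
    rw [ENNReal.toReal_ofReal']
    simp [le_abs_self]
  · filter_upwards [hA] with ω hω
    have hint : Integrable (fun l => p (Z ω, l) * q (L ω + e ω - l)) (P.map L) := by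
      by_contra h
      have h1 := hDr (Z ω, L ω + e ω)
      rw [integral_undef h] at h1
      exact (ENNReal.toReal_pos hω.1 hω.2).ne h1
    have hint2 : Integrable (fun l => w (Z ω, l) * (p (Z ω, l) * q (L ω + e ω - l))) (P.map L) :=
      hint.bdd_mul (c := C) (Measurable.aestronglyMeasurable (by fun_prop)) (ae_of_all _ fun l => hwC _)
    have h3 := hWr (Z ω, L ω + e ω)
    simp only [add_mul, mul_assoc] at h3
    rw [integral_add hint2 (hint.const_mul C), integral_const_mul] at h3
    have h4 := hDr (Z ω, L ω + e ω)
    simp only at h4 h3 ⊢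
    have h5 : (W (Z ω, L ω + e ω) / D (Z ω, L ω + e ω)).toReal * (D (Z ω, L ω + e ω)).toReal =
        (W (Z ω, L ω + e ω)).toReal := by
      rw [← ENNReal.toReal_mul, ENNReal.div_mul_cancel hω.1 hω.2]
    simp only [mul_assoc]
    rw [h4] at h3 ⊢
    rw [sub_mul, h5, ← h3]
    ring
  · intro S hS
    have hVm : Measurable (fun ω => (Z ω, L ω + e ω, M ω)) := by fun_prop
    have h1 := hB (S.indicator 1) (measurable_one.indicator hS)
    have conv : ∀ f : Ω → ℝ≥0∞, ∫⁻ ω, f ω * S.indicator 1 (Z ω, L ω + e ω, M ω) ∂P =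
        ∫⁻ ω in (fun ω => (Z ω, L ω + e ω, M ω)) ⁻¹' S, f ω ∂P := by
      intro f
      rw [← lintegral_indicator (hVm hS)]
      refine lintegral_congr fun ω => ?_
      by_cases h : (Z ω, L ω + e ω, M ω) ∈ S <;> simp [h]
    rw [conv, conv] at h1
    have i1 : Integrable (fun ω => w (Z ω, L ω)) P :=
      Integrable.of_bound (Measurable.aestronglyMeasurable (by fun_prop)) C (ae_of_all _ fun ω => hwC _)
    have i2 : Integrable (fun ω => (W (Z ω, L ω + e ω) / D (Z ω, L ω + e ω)).toReal) P :=
      Integrable.of_bound (C := (ENNReal.ofReal (2 * C)).toReal) (Measurable.aestronglyMeasurable (by fun_prop)) (ae_of_all _ fun ω => by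
        rw [Real.norm_of_nonneg ENNReal.toReal_nonneg]
        exact ENNReal.toReal_mono ENNReal.ofReal_ne_top (hWD _))
    have e1 : ∫ ω in (fun ω => (Z ω, L ω + e ω, M ω)) ⁻¹' S, (w (Z ω, L ω) + C) ∂P =
        ∫ ω in (fun ω => (Z ω, L ω + e ω, M ω)) ⁻¹' S,
          (W (Z ω, L ω + e ω) / D (Z ω, L ω + e ω)).toReal ∂P := by
      rw [integral_eq_lintegral_of_nonneg_ae (ae_of_all _ fun ω => hw0 _) (Measurable.aestronglyMeasurable (by fun_prop)), h1,
        integral_toReal (by fun_prop) (ae_of_all _ fun ω => (hWD _).trans_lt ENNReal.ofReal_lt_top)]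
    rw [integral_add i1.integrableOn (integrable_const _)] at e1
    rw [integral_sub i2.integrableOn (integrable_const _), ← e1]
    ring

theorem int_wd {α : Type*} [MeasurableSpace α] (m : Measure α) (f : α → ℝ) (hf : Measurable f)
    (hf0 : ∀ a, 0 ≤ f a) (hm : IsProbabilityMeasure (m.withDensity fun a => ENNReal.ofReal (f a))) :
    Integrable f m := by
  refine (lintegral_ofReal_ne_top_iff_integrable hf.aestronglyMeasurable (ae_of_all _ hf0)).1 ?_
  have := hm.measure_univ
  rw [withDensity_apply _ .univ, Measure.restrict_univ] at this
  rw [this]; simp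

theorem jlaw {Ω E : Type*} [MeasurableSpace Ω] [MeasurableSpace E]
    (P : Measure Ω) [IsProbabilityMeasure P] (Z : Ω → E) (L : Ω → ℝ)
    (hZ : Measurable Z) (hL : Measurable L)
    (p : E × ℝ → ℝ) (hp : Measurable p) (hp0 : ∀ z, 0 ≤ p z)
    (hint : ∀ᵐ ω ∂P, Integrable (fun l => p (Z ω, l)) (P.map L))
    (h : ∀ A : Set E, MeasurableSet A → ∀ B : Set ℝ, MeasurableSet B →
      ∫ ω in Z ⁻¹' A, B.indicator 1 (L ω) ∂P =
        ∫ ω in Z ⁻¹' A, (∫ l, B.indicator 1 l * p (Z ω, l) ∂(P.map L)) ∂P)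
    (h' : ∀ B : Set ℝ, MeasurableSet B →
      Integrable (fun ω => ∫ l, B.indicator 1 l * p (Z ω, l) ∂(P.map L)) P) :
    P.map (fun ω => (Z ω, L ω)) =
      ((P.map Z).prod (P.map L)).withDensity fun z => ENNReal.ofReal (p z) := by
  have := Measure.isProbabilityMeasure_map (μ := P) hL.aemeasurable
  have := Measure.isProbabilityMeasure_map (μ := P) hZ.aemeasurable
  have := Measure.isProbabilityMeasure_map (μ := P) (hZ.prodMk hL).aemeasurable
  apply Measure.ext_prod
  intro A B hA hB
  rw [Measure.map_apply (by fun_prop) (hA.prod hB), withDensity_apply _ (hA.prod hB),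
    ← lintegral_indicator (hA.prod hB),
    lintegral_prod _ ((Measurable.indicator (by fun_prop) (hA.prod hB)).aemeasurable)]
  have e1 : ∀ x, ∫⁻ l, (A ×ˢ B).indicator (fun z => ENNReal.ofReal (p z)) (x, l) ∂(P.map L) =
      A.indicator (fun x => ∫⁻ l in B, ENNReal.ofReal (p (x, l)) ∂(P.map L)) x := by
    intro x
    by_cases hx : x ∈ A
    · simp only [hx, indicator_of_mem]
      rw [← lintegral_indicator hB]
      refine lintegral_congr fun l => ?_
      by_cases hl : l ∈ B <;> simp [hx, hl]
    · simp only [hx, not_false_eq_true, indicator_of_notMem]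
      simp [hx]
  simp_rw [e1]
  rw [lintegral_indicator hA, setLIntegral_map hA (by fun_prop) hZ]
  have hAB := h A hA B hB
  have e2 : ∫ ω in Z ⁻¹' A, B.indicator 1 (L ω) ∂P = P.real (Z ⁻¹' A ∩ L ⁻¹' B) := by
    have : (fun ω => B.indicator (1 : ℝ → ℝ) (L ω)) = (L ⁻¹' B).indicator 1 := by
      ext ω; by_cases h : L ω ∈ B <;> simp [h]
    rw [this, integral_indicator_one (hL hB), measureReal_restrict_apply (hL hB), inter_comm]
  have e3 : (fun ω => (Z ω, L ω)) ⁻¹' (A ×ˢ B) = Z ⁻¹' A ∩ L ⁻¹' B := by ext; simp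
  rw [e3]
  rw [e2] at hAB
  have e4 : P (Z ⁻¹' A ∩ L ⁻¹' B) = ENNReal.ofReal (P.real (Z ⁻¹' A ∩ L ⁻¹' B)) := by simp
  rw [e4, hAB, ofReal_integral_eq_lintegral_ofReal (h' B hB).integrableOn]
  · refine lintegral_congr_ae (ae_restrict_of_ae ?_)
    filter_upwards [hint] with ω hω
    rw [ofReal_integral_eq_lintegral_ofReal, ← lintegral_indicator hB]
    · refine lintegral_congr fun l => ?_
      by_cases hl : l ∈ B <;> simp [hl]
    · refine hω.bdd_mul (c := 1) (measurable_one.indicator hB).aestronglyMeasurable (ae_of_all _ fun l => ?_)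
      by_cases hl : l ∈ B <;> simp [hl]
    · refine ae_of_all _ fun l => mul_nonneg ?_ (hp0 _)
      by_cases hl : l ∈ B <;> simp [hl]
  · refine ae_of_all _ fun ω => integral_nonneg fun l => mul_nonneg ?_ (hp0 _)
    by_cases hl : l ∈ B <;> simp [hl]

theorem klem {E' E : Type*} [MeasurableSpace E'] [MeasurableSpace E]
    (μ : Measure E') [IsProbabilityMeasure μ] (ν : Measure ℝ) [IsProbabilityMeasure ν]
    (κ : Measure (E' × ℝ)) [IsProbabilityMeasure κ]
    (π : E' → E) (hπ : Measurable π)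
    (pθ : E' × ℝ → ℝ) (hpθ : Measurable pθ) (hpθ0 : ∀ z, 0 ≤ pθ z)
    (p : E × ℝ → ℝ) (hp : Measurable p) (hp0 : ∀ z, 0 ≤ p z)
    (hκ : κ = (μ.prod ν).withDensity fun z => ENNReal.ofReal (pθ z))
    (hκt : κ.map (Prod.map π id) = ((μ.map π).prod ν).withDensity fun z => ENNReal.ofReal (p z))
    (Y : E' × ℝ → ℝ) (hY : Measurable Y) (C : ℝ) (hYC : ∀ z, |Y z| ≤ C)
    (v : E × ℝ → ℝ) (hv : Measurable v)
    (hvv : ∀ᵐ l ∂ν, Integrable (fun z => Y (z, l) * pθ (z, l)) μ →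
      Integrable (fun z => v (π z, l)) μ ∧
      ∫ z, |v (π z, l)| ∂μ ≤ ∫ z, |Y (z, l) * pθ (z, l)| ∂μ ∧
      ∀ A : Set E, MeasurableSet A →
        ∫ z in π ⁻¹' A, v (π z, l) ∂μ = ∫ z in π ⁻¹' A, Y (z, l) * pθ (z, l) ∂μ) :
    ∃ w : E × ℝ → ℝ, Measurable w ∧ (∀ z, |w z| ≤ C) ∧
      (∀ᵐ z ∂((μ.map π).prod ν), v z = w z * p z) ∧
      ∀ G : Set (E × ℝ), MeasurableSet G →
        ∫ z in (Prod.map π id) ⁻¹' G, Y z ∂κ =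
          ∫ z in (Prod.map π id) ⁻¹' G, w (Prod.map π id z) ∂κ := by
  have hπ2 : Measurable (Prod.map π (id : ℝ → ℝ)) := hπ.prodMap measurable_id
  have := Measure.isProbabilityMeasure_map (μ := μ) hπ.aemeasurable
  have := Measure.isProbabilityMeasure_map (μ := κ) hπ2.aemeasurable
  have hC0 : 0 ≤ C := by
    obtain ⟨z⟩ : Nonempty (E' × ℝ) := κ.nonempty_of_neZero
    exact (abs_nonneg _).trans (hYC z)
  have hpθi : Integrable pθ (μ.prod ν) := int_wd _ _ hpθ hpθ0 (by rw [← hκ]; infer_instance)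
  have hpi : Integrable p ((μ.map π).prod ν) := int_wd _ _ hp hp0 (by rw [← hκt]; infer_instance)
  have hfi : Integrable (fun z => Y z * pθ z) (μ.prod ν) :=
    hpθi.bdd_mul (c := C) hY.aestronglyMeasurable (ae_of_all _ hYC)
  have hvv' : ∀ᵐ l ∂ν, Integrable (fun z => v (π z, l)) μ ∧
      ∫ z, |v (π z, l)| ∂μ ≤ ∫ z, |Y (z, l) * pθ (z, l)| ∂μ ∧
      ∀ A : Set E, MeasurableSet A →
        ∫ z in π ⁻¹' A, v (π z, l) ∂μ = ∫ z in π ⁻¹' A, Y (z, l) * pθ (z, l) ∂μ := by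
    filter_upwards [hvv, hfi.prod_left_ae] with l h1 h2
    exact h1 h2
  have hvi : Integrable (fun z => v (Prod.map π id z)) (μ.prod ν) := by
    refine (integrable_prod_iff' (f := fun z => v (Prod.map π id z))
      (hv.comp hπ2).aestronglyMeasurable).2 ?_
    refine ⟨hvv'.mono fun l h => h.1, ?_⟩
    refine Integrable.mono' hfi.integral_norm_prod_right
      (hv.comp hπ2).norm.aestronglyMeasurable.prod_swap.integral_prod_right' ?_
    filter_upwards [hvv'] with l hl
    rw [Real.norm_of_nonneg (integral_nonneg fun _ => norm_nonneg _)]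
    exact hl.2.1
  have hprod : (μ.map π).prod ν = (μ.prod ν).map (Prod.map π id) := by
    rw [← Measure.map_prod_map _ _ hπ measurable_id, Measure.map_id]
  have hvi' : Integrable v ((μ.map π).prod ν) := by
    rw [hprod, integrable_map_measure hv.aestronglyMeasurable hπ2.aemeasurable]
    exact hvi
  have K : ∀ G : Set (E × ℝ), MeasurableSet G →
      ∫ z in (Prod.map π id) ⁻¹' G, Y z ∂κ = ∫ z in G, v z ∂((μ.map π).prod ν) := by
    intro G hG
    rw [hκ, setInt_wd _ _ hpθ hpθ0 _ (hπ2 hG), hprod,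
      setIntegral_map hG hv.aestronglyMeasurable hπ2.aemeasurable,
      ← integral_indicator (hπ2 hG), ← integral_indicator (hπ2 hG)]
    simp_rw [mul_comm (pθ _)]
    rw [integral_prod_symm _ (hfi.indicator (hπ2 hG)), integral_prod_symm _ (hvi.indicator (hπ2 hG))]
    refine integral_congr_ae ?_
    filter_upwards [hvv'] with l hl
    have hA : MeasurableSet {x : E | (x, l) ∈ G} := (measurable_id.prodMk measurable_const) hG
    have := hl.2.2 _ hA
    rw [← integral_indicator (hπ hA), ← integral_indicator (hπ hA)] at this
    exact this.symm
  have hGp : ∀ G : Set (E × ℝ), MeasurableSet G →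
      κ.real ((Prod.map π id) ⁻¹' G) = ∫ z in G, p z ∂((μ.map π).prod ν) := by
    intro G hG
    have h1 := setInt_wd ((μ.map π).prod ν) p hp hp0 (fun _ => 1) hG
    rw [← hκt] at h1
    simp only [mul_one] at h1
    rw [← h1]
    simp [map_measureReal_apply hπ2 hG]
  have hbd : ∀ G : Set (E × ℝ), MeasurableSet G →
      |∫ z in G, v z ∂((μ.map π).prod ν)| ≤ ∫ z in G, C * p z ∂((μ.map π).prod ν) := by
    intro G hG
    rw [← K G hG, integral_const_mul, ← hGp G hG]
    exact norm_setIntegral_le_of_norm_le_const (f := Y) (μ := κ) (C := C) (measure_lt_top _ _) fun z _ => hYC z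
  have b1 : v ≤ᵐ[(μ.map π).prod ν] fun z => C * p z :=
    ae_le_of_forall_setIntegral_le hvi' (hpi.const_mul C) fun G hG _ => (abs_le.1 (hbd G hG)).2
  have b2 : (fun z => - (C * p z)) ≤ᵐ[(μ.map π).prod ν] v :=
    ae_le_of_forall_setIntegral_le (hpi.const_mul C).neg hvi' fun G hG _ => by
      rw [integral_neg]; exact (abs_le.1 (hbd G hG)).1
  have hset : MeasurableSet {z | |v z| ≤ C * p z} := measurableSet_le (by fun_prop) (by fun_prop)
  have hwv : ∀ᵐ z ∂((μ.map π).prod ν), v z = (if |v z| ≤ C * p z then v z / p z else 0) * p z := by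
    filter_upwards [b1, b2] with z h1 h2
    have h3 : |v z| ≤ C * p z := abs_le.2 ⟨h2, h1⟩
    rw [if_pos h3]
    by_cases h0 : p z = 0
    · rw [h0, mul_zero] at h3
      rw [h0, mul_zero]; exact abs_eq_zero.1 (le_antisymm h3 (abs_nonneg _))
    · field_simp
  have hwm : Measurable (fun z => if |v z| ≤ C * p z then v z / p z else 0) :=
    Measurable.ite hset (by fun_prop) measurable_const
  refine ⟨fun z => if |v z| ≤ C * p z then v z / p z else 0, hwm, ?_, hwv, ?_⟩
  · intro z
    by_cases h : |v z| ≤ C * p z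
    · simp only [h, if_true]
      rw [abs_div, abs_of_nonneg (hp0 z)]
      exact div_le_of_le_mul₀ (hp0 z) hC0 h
    · simp [h, hC0]
  · intro G hG
    rw [K G hG, ← setIntegral_map hG hwm.aestronglyMeasurable hπ2.aemeasurable, hκt,
      setInt_wd _ _ hp hp0 _ hG]
    refine integral_congr_ae (ae_restrict_of_ae ?_)
    filter_upwards [hwv] with z hz
    rw [mul_comm]; exact hz

theorem indlem {Ω U V : Type*} [MeasurableSpace Ω] [MeasurableSpace U] [MeasurableSpace V]
    (P : Measure Ω) [IsProbabilityMeasure P] (X : Ω → U) (T : Ω → V) (hX : Measurable X)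
    (hT : Measurable T) (hI : P.map (fun ω => (X ω, T ω)) = (P.map X).prod (P.map T))
    (a b : U → ℝ) (ha : Measurable a) (hb : Measurable b) (C : ℝ) (haC : ∀ u, |a u| ≤ C)
    (hbC : ∀ u, |b u| ≤ C) (S : Set (U × V)) (hS : MeasurableSet S)
    (h : ∀ s, ∫ u in {u | (u, s) ∈ S}, a u ∂(P.map X) = ∫ u in {u | (u, s) ∈ S}, b u ∂(P.map X)) :
    ∫ ω in (fun ω => (X ω, T ω)) ⁻¹' S, a (X ω) ∂P = ∫ ω in (fun ω => (X ω, T ω)) ⁻¹' S, b (X ω) ∂P := by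
  have := Measure.isProbabilityMeasure_map (μ := P) hX.aemeasurable
  have := Measure.isProbabilityMeasure_map (μ := P) hT.aemeasurable
  have key : ∀ a : U → ℝ, Measurable a → (∀ u, |a u| ≤ C) →
      ∫ ω in (fun ω => (X ω, T ω)) ⁻¹' S, a (X ω) ∂P =
        ∫ s, ∫ u in {u | (u, s) ∈ S}, a u ∂(P.map X) ∂(P.map T) := by
    intro a ha haC
    have ham : Measurable (fun z : U × V => a z.1) := by fun_prop
    have hi : Integrable (fun z : U × V => a z.1) ((P.map X).prod (P.map T)) :=
      Integrable.of_bound ham.aestronglyMeasurable C (ae_of_all _ fun z => haC _)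
    rw [← setIntegral_map (f := fun z : U × V => a z.1) hS ham.aestronglyMeasurable
      (hX.prodMk hT).aemeasurable, hI, ← integral_indicator hS,
      integral_prod_symm _ (hi.indicator hS)]
    congr 1; ext s
    have hA : MeasurableSet {u : U | (u, s) ∈ S} := (measurable_id.prodMk measurable_const) hS
    rw [← integral_indicator hA]
    rfl
  rw [key a ha haC, key b hb hbC]
  simp_rw [h]

theorem runInf_meas {Ω : Type*} {m : MeasurableSpace Ω} (X : ℝ≥0 → Ω → ℝ) (θ : ℝ≥0)
    (hX : ∀ s ≤ θ, Measurable (X s)) (hc : ∀ ω, Continuous fun s => X s ω) :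
    Measurable (fun ω => ⨅ s : Set.Icc (0 : ℝ≥0) θ, X s.1 ω) := by
  obtain ⟨D, hDc, hDd⟩ := TopologicalSpace.exists_countable_dense (Set.Icc (0 : ℝ≥0) θ)
  have : Nonempty (Set.Icc (0 : ℝ≥0) θ) := ⟨⟨0, by simp⟩⟩
  refine measurable_of_Iio fun c => ?_
  have : (fun ω => ⨅ s : Set.Icc (0 : ℝ≥0) θ, X s.1 ω) ⁻¹' Iio c = ⋃ s ∈ D, {ω | X s.1 ω < c} := by
    ext ω
    have hcont : Continuous (fun s : Set.Icc (0 : ℝ≥0) θ => X s.1 ω) :=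
      (hc ω).comp continuous_subtype_val
    simp only [mem_preimage, mem_Iio, mem_iUnion, mem_ofPred_eq, exists_prop]
    rw [ciInf_lt_iff (isCompact_range hcont).bddBelow]
    constructor
    · rintro ⟨s, hs⟩
      obtain ⟨r, hr, hrD⟩ := hDd.inter_open_nonempty {s | X s.1 ω < c}
        (isOpen_lt hcont continuous_const) ⟨s, hs⟩
      exact ⟨r, hrD, hr⟩
    · rintro ⟨s, _, hs⟩; exact ⟨s, hs⟩
  rw [this]
  exact MeasurableSet.biUnion hDc fun s _ => measurableSet_lt (hX s.1 s.2.2) measurable_const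

theorem final_abs {Ω E' E N : Type*} (mI : MeasurableSpace Ω) {m0 : MeasurableSpace Ω} {mE' : MeasurableSpace E'}
    {mE : MeasurableSpace E} {mN : MeasurableSpace N}
    (P : Measure Ω) [IsProbabilityMeasure P] (Zθ : Ω → E') (π : E' → E) (L e : Ω → ℝ) (M : Ω → N)
    (hZθ : Measurable Zθ) (hπ : Measurable π) (hL : Measurable L) (he : Measurable e)
    (hM : Measurable M)
    (pθ : E' × ℝ → ℝ) (hpθ : Measurable pθ) (hpθ0 : ∀ z, 0 ≤ pθ z)
    (p : E × ℝ → ℝ) (hp : Measurable p) (hp0 : ∀ z, 0 ≤ p z)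
    (q : ℝ → ℝ) (hq : Measurable q) (hq0 : ∀ z, 0 ≤ q z)
    (hJθ : P.map (fun ω => (Zθ ω, L ω)) =
      ((P.map Zθ).prod (P.map L)).withDensity fun z => ENNReal.ofReal (pθ z))
    (hJ : P.map (fun ω => (π (Zθ ω), L ω)) =
      ((P.map (fun ω => π (Zθ ω))).prod (P.map L)).withDensity fun z => ENNReal.ofReal (p z))
    (hI1 : IndepFun (fun ω => (Zθ ω, L ω)) (fun ω => (e ω, M ω)) P)
    (hI2 : IndepFun e M P)
    (hqd : P.map e = volume.withDensity fun x => ENNReal.ofReal (q x))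
    (Y : E' × ℝ → ℝ) (hY : Measurable Y) (C : ℝ) (hYC : ∀ z, |Y z| ≤ C)
    (v : E × ℝ → ℝ) (hv : Measurable v)
    (hvv : ∀ᵐ l ∂(P.map L), Integrable (fun ω => Y (Zθ ω, l) * pθ (Zθ ω, l)) P →
      Integrable (fun ω => v (π (Zθ ω), l)) P ∧
      ∫ ω, |v (π (Zθ ω), l)| ∂P ≤ ∫ ω, |Y (Zθ ω, l) * pθ (Zθ ω, l)| ∂P ∧
      ∀ A : Set E, MeasurableSet A →
        ∫ ω in (fun ω => π (Zθ ω)) ⁻¹' A, v (π (Zθ ω), l) ∂P =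
          ∫ ω in (fun ω => π (Zθ ω)) ⁻¹' A, Y (Zθ ω, l) * pθ (Zθ ω, l) ∂P)
    (hmI0 : mI ≤ m0)
    (hmI : mI ≤ MeasurableSpace.comap (fun ω => (π (Zθ ω), L ω + e ω, M ω)) inferInstance)
    (hmI' : Measurable[mI] (fun ω => (π (Zθ ω), L ω + e ω))) :
    (∀ᵐ ω ∂P, 0 < ∫ l, p (π (Zθ ω), l) * q (L ω + e ω - l) ∂(P.map L)) ∧
    ∀ᵐ ω ∂P, (P[fun ω => Y (Zθ ω, L ω)|mI]) ω *
      (∫ l, p (π (Zθ ω), l) * q (L ω + e ω - l) ∂(P.map L)) =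
      ∫ l, v (π (Zθ ω), l) * q (L ω + e ω - l) ∂(P.map L) := by
  have := Measure.isProbabilityMeasure_map (μ := P) hL.aemeasurable
  have := Measure.isProbabilityMeasure_map (μ := P) hZθ.aemeasurable
  have := Measure.isProbabilityMeasure_map (μ := P) (hZθ.prodMk hL).aemeasurable
  have hπ2 : Measurable (Prod.map π (id : ℝ → ℝ)) := hπ.prodMap measurable_id
  have hZt : Measurable (fun ω => π (Zθ ω)) := hπ.comp hZθ
  have hmapt : (P.map Zθ).map π = P.map (fun ω => π (Zθ ω)) := by
    rw [Measure.map_map hπ hZθ]; rfl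
  have hmapt2 : (P.map (fun ω => (Zθ ω, L ω))).map (Prod.map π id) =
      P.map (fun ω => (π (Zθ ω), L ω)) := by
    rw [Measure.map_map hπ2 (hZθ.prodMk hL)]; rfl
  obtain ⟨w, hwm, hwC, hwv, hwG⟩ := klem (P.map Zθ) (P.map L) (P.map (fun ω => (Zθ ω, L ω))) π hπ
    pθ hpθ hpθ0 p hp hp0 hJθ (by rw [hmapt, hmapt2, hJ]) Y hY C hYC v hv (by
      filter_upwards [hvv] with l hl
      have m1 : Measurable (fun z => Y (z, l) * pθ (z, l)) := by fun_prop
      have m2 : Measurable (fun z => v (π z, l)) := by fun_prop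
      rw [integrable_map_measure m1.aestronglyMeasurable hZθ.aemeasurable,
        integrable_map_measure m2.aestronglyMeasurable hZθ.aemeasurable,
        integral_map hZθ.aemeasurable m2.abs.aestronglyMeasurable,
        integral_map hZθ.aemeasurable m1.abs.aestronglyMeasurable]
      intro h
      refine ⟨(hl h).1, (hl h).2.1, fun A hA => ?_⟩
      rw [setIntegral_map (hπ hA) m1.aestronglyMeasurable hZθ.aemeasurable,
        setIntegral_map (hπ hA) m2.aestronglyMeasurable hZθ.aemeasurable]
      exact (hl h).2.2 A hA)
  rw [hmapt] at hwv
  have hprodeM := (indepFun_iff_map_prod_eq_prod_map_map he.aemeasurable hM.aemeasurable).1 hI2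
  have hI1' : IndepFun (fun ω => (π (Zθ ω), L ω)) (fun ω => (e ω, M ω)) P :=
    hI1.comp hπ2 measurable_id
  have hI := (indepFun_iff_map_prod_eq_prod_map_map (hZt.prodMk hL).aemeasurable
    (he.prodMk hM).aemeasurable).1 hI1'
  rw [hprodeM] at hI
  have hIθ := (indepFun_iff_map_prod_eq_prod_map_map (hZθ.prodMk hL).aemeasurable
    (he.prodMk hM).aemeasurable).1 hI1
  obtain ⟨hpos, u, hum, ⟨K, huK⟩, huD, huS⟩ := core_real P (fun ω => π (Zθ ω)) L e M hZt hL he hM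
    p hp hp0 q hq hq0 hJ hI hqd w hwm C hwC
  refine ⟨hpos, ?_⟩
  have hYi : Integrable (fun ω => Y (Zθ ω, L ω)) P :=
    Integrable.of_bound (hY.comp (hZθ.prodMk hL)).aestronglyMeasurable C (ae_of_all _ fun _ => hYC _)
  have hui : Integrable (fun ω => u (π (Zθ ω), L ω + e ω)) P :=
    Integrable.of_bound (Measurable.aestronglyMeasurable (by fun_prop)) K (ae_of_all _ fun _ => huK _)
  have hce : (fun ω => u (π (Zθ ω), L ω + e ω)) =ᵐ[P] P[fun ω => Y (Zθ ω, L ω)|mI] := by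
    refine ae_eq_condExp_of_forall_setIntegral_eq hmI0 hYi (fun s _ _ => hui.integrableOn) ?_
      (hum.comp hmI').stronglyMeasurable.aestronglyMeasurable
    intro s hs _
    obtain ⟨S, hS, rfl⟩ := hmI s hs
    rw [← huS S hS]
    have hf : Measurable (fun r : (E' × ℝ) × (ℝ × N) => (π r.1.1, r.1.2 + r.2.1, r.2.2)) := by
      fun_prop
    refine (indlem P (fun ω => (Zθ ω, L ω)) (fun ω => (e ω, M ω)) (hZθ.prodMk hL) (he.prodMk hM)
      hIθ Y (fun z => w (Prod.map π id z)) hY (hwm.comp hπ2) C hYC (fun z => hwC _)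
      ((fun r : (E' × ℝ) × (ℝ × N) => (π r.1.1, r.1.2 + r.2.1, r.2.2)) ⁻¹' S) (hf hS) ?_).symm
    intro s
    have hf2 : Measurable (fun r : E × ℝ => (r.1, r.2 + s.1, s.2)) := by fun_prop
    exact hwG ((fun r : E × ℝ => (r.1, r.2 + s.1, s.2)) ⁻¹' S) (hf2 hS)
  have hae := ae_of_ae_map hZt.aemeasurable (Measure.ae_ae_of_ae_prod hwv)
  filter_upwards [hce, huD, hae] with ω h1 h2 h3
  rw [← h1, h2]
  refine integral_congr_ae ?_
  filter_upwards [h3] with l hl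
  rw [hl]

theorem jacod_law {Ω : Type*} (m : MeasurableSpace Ω) {m0 : MeasurableSpace Ω} {P : Measure Ω} [IsProbabilityMeasure P]
    (hm : m ≤ m0) (L : Ω → ℝ) (hL : Measurable L)
    (p : ℝ → Ω → ℝ) (hp0 : ∀ x ω, 0 ≤ p x ω)
    (hp : Measurable[m.prod inferInstance] fun q : Ω × ℝ => p q.2 q.1)
    (hd : ∀ (f : ℝ → ℝ), Measurable f → (∃ C, ∀ x, |f x| ≤ C) →
      (P[fun ω => f (L ω)|m]) =ᵐ[P] fun ω => ∫ x, f x * p x ω ∂(P.map L)) :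
    @Measure.map Ω (Ω × ℝ) m0 (m.prod inferInstance) (fun ω => (id ω, L ω)) P =
      @Measure.withDensity _ (m.prod inferInstance)
        (@Measure.prod Ω ℝ m _ (@Measure.map Ω Ω m0 m id P) (P.map L))
        (fun z => ENNReal.ofReal (p z.2 z.1)) := by
  have hb : ∀ B : Set ℝ, ∃ C : ℝ, ∀ x, |B.indicator (1 : ℝ → ℝ) x| ≤ C := fun B =>
    ⟨1, fun x => by by_cases h : x ∈ B <;> simp [h]⟩
  refine @jlaw Ω Ω m0 m P _ id L (measurable_id'' hm) hL (fun z => p z.2 z.1) hp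
    (fun z => hp0 _ _) ?_ ?_ ?_
  · have h1 := hd (fun _ => 1) measurable_const ⟨1, by simp⟩
    have : (P[fun _ : Ω => (1 : ℝ)|m]) = fun _ => 1 := condExp_const hm 1
    rw [this] at h1
    filter_upwards [h1] with ω hω
    by_contra hn
    simp only [one_mul] at hω
    simp only [id] at hn
    rw [integral_undef hn] at hω
    exact one_ne_zero hω
  · intro A hA B hB
    have h1 := hd (B.indicator 1) (measurable_one.indicator hB) (hb B)
    have hi : Integrable (fun ω => B.indicator (1 : ℝ → ℝ) (L ω)) P :=
      Integrable.of_bound ((measurable_one.indicator hB).comp hL).aestronglyMeasurable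
        (hb B).choose (ae_of_all _ fun ω => (hb B).choose_spec _)
    have hA' : MeasurableSet[m] A := hA
    change ∫ ω in A, _ ∂P = ∫ ω in A, _ ∂P
    rw [← setIntegral_condExp hm hi hA']
    exact integral_congr_ae (ae_restrict_of_ae h1)
  · intro B hB
    exact integrable_condExp.congr (hd (B.indicator 1) (measurable_one.indicator hB) (hb B))

/-- The sigma-algebra of the past increments of the noise. -/
def incSigma {Ω : Type*} (ε : ℝ≥0 → Ω → ℝ) (t : ℝ≥0) : MeasurableSpace Ω :=
  ⨆ s ∈ Set.Iic t, MeasurableSpace.comap (fun ω => ε s ω - ε t ω) inferInstance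

theorem indepFun_of_indep {Ω β γ : Type*} {m0 : MeasurableSpace Ω} {mβ : MeasurableSpace β}
    {mγ : MeasurableSpace γ} (f : Ω → β) (g : Ω → γ) (P : Measure Ω)
    (h : Indep (MeasurableSpace.comap f mβ) (MeasurableSpace.comap g mγ) P) : IndepFun f g P :=
  (IndepFun_iff_Indep f g P).2 h

theorem meas_pair {Ω β γ : Type*} (m : MeasurableSpace Ω) (mβ : MeasurableSpace β)
    (mγ : MeasurableSpace γ) {f : Ω → β} {g : Ω → γ} (hf : Measurable f) (hg : Measurable g) :
    Measurable (fun ω => (f ω, g ω)) := hf.prodMk hg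

end Helpers

/-- **Proposition 5.1, second formula.** Under Jacod's density hypothesis and the
noisy-barrier setup, if `v(·,l)` is, for `P^L`-a.e. `l`, a version of
`E_P[φ_θ p_θ(l) 1_{X*_θ > l} | F_t]`, then `D_t := ∫ p_t(l) q_t(L_t − l) P^L(dl)` is a.s.
positive and, `P`-a.s., `E_P[φ_θ 1_{τ > θ} | F^I_t] · D_t = ∫ v(·,l) q_t(L_t − l)
P^L(dl)`. -/
theorem noisy_information_key_lemma_Fmeasurable
    {Ω : Type*} [m0 : MeasurableSpace Ω] {P : Measure Ω} [IsProbabilityMeasure P]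
    (F : Filtration ℝ≥0 m0)
    (X : ℝ≥0 → Ω → ℝ) (hX_adapted : Adapted F X)
    (hX_cont : ∀ ω, Continuous fun s => X s ω)
    (L : Ω → ℝ) (hL : Measurable L)
    (hX0 : ∀ᵐ ω ∂P, L ω < X 0 ω)
    (τ : Ω → ℝ≥0)
    (hτ : ∀ (θ : ℝ≥0) (ω : Ω), θ < τ ω ↔ L ω < runInf X θ ω)
    -- Jacod's density hypothesis
    (p : ℝ≥0 → ℝ → Ω → ℝ)
    (hp_nonneg : ∀ t x ω, 0 ≤ p t x ω)
    (hp_meas : ∀ t, Measurable[(F t).prod inferInstance] fun q : Ω × ℝ => p t q.2 q.1)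
    (hp_pos : ∀ t, ∀ᵐ ω ∂P, 0 < p t (L ω) ω)
    (hp_density : ∀ (t : ℝ≥0) (f : ℝ → ℝ), Measurable f → (∃ C, ∀ x, |f x| ≤ C) →
      (P[fun ω => f (L ω)|F t]) =ᵐ[P] fun ω => ∫ x, f x * p t x ω ∂(P.map L))
    -- the noise process: continuous, independent of `F_∞ ∨ σ(L)`, with backwardly
    -- independent increments, whose marginal laws admit Lebesgue densities `q_t`
    (ε : ℝ≥0 → Ω → ℝ) (hε_meas : ∀ s, Measurable (ε s))
    (hε_cont : ∀ ω, Continuous fun s => ε s ω)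
    (hε_indep : Indep (⨆ s, MeasurableSpace.comap (ε s) inferInstance)
      ((⨆ s, F s) ⊔ MeasurableSpace.comap L inferInstance) P)
    (hε_back : ∀ t θ : ℝ≥0, t ≤ θ →
      Indep (⨆ s ∈ Set.Iic t, MeasurableSpace.comap (fun ω => ε s ω - ε t ω) inferInstance)
        (MeasurableSpace.comap (ε θ) inferInstance) P)
    (q : ℝ≥0 → ℝ → ℝ) (hq_meas : ∀ s, Measurable (q s)) (hq_nonneg : ∀ s x, 0 ≤ q s x)
    (hq_density : ∀ s, P.map (ε s) = volume.withDensity fun x => ENNReal.ofReal (q s x))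
    -- times and payoff
    (t θ : ℝ≥0) (htθ : t ≤ θ)
    (φ : Ω → ℝ)
    (hφ_meas : Measurable[F θ] φ)
    (hφ_bdd : ∃ C, ∀ ω, |φ ω| ≤ C)
    -- the kernel `v`
    (v : Ω × ℝ → ℝ)
    (hv_meas : Measurable[(F t).prod inferInstance] v)
    (hv : ∀ᵐ l ∂(P.map L), (fun ω => v (ω, l)) =ᵐ[P]
      P[fun ω => φ ω * p θ l ω * (if l < runInf X θ ω then 1 else 0)|F t]) :
    (∀ᵐ ω ∂P, 0 < ∫ l, p t l ω * q t (L ω + ε t ω - l) ∂(P.map L)) ∧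
    ∀ᵐ ω ∂P,
      (P[fun ω' => φ ω' * (if θ < τ ω' then 1 else 0)|insiderSigma F L ε t]) ω
        * (∫ l, p t l ω * q t (L ω + ε t ω - l) ∂(P.map L))
      = ∫ l, v (ω, l) * q t (L ω + ε t ω - l) ∂(P.map L) := by
  classical
  obtain ⟨C, hC⟩ := hφ_bdd
  have hε_le : (⨆ s, MeasurableSpace.comap (ε s) inferInstance) ≤ m0 :=
    iSup_le fun s => (hε_meas s).comap_le
  have hε_sup : ∀ s, Measurable[⨆ s, MeasurableSpace.comap (ε s) inferInstance] (ε s) := fun s =>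
    Measurable.mono (comap_measurable (ε s))
      (le_iSup (fun s => MeasurableSpace.comap (ε s) inferInstance) s) le_rfl
  have hmE_sup : (incSigma ε t) ≤ ⨆ s, MeasurableSpace.comap (ε s) inferInstance :=
    iSup₂_le fun s _ => Measurable.comap_le
      ((hε_sup s).sub (hε_sup t))
  have hmE0 : (incSigma ε t) ≤ m0 := hmE_sup.trans hε_le
  have hrun : Measurable[F θ] (runInf X θ) :=
    @runInf_meas Ω (F θ) X θ
      (fun s hs => (hX_adapted s).mono (F.mono hs) le_rfl) hX_cont
  have hYm : @Measurable (Ω × ℝ) ℝ ((F θ).prod inferInstance) _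
      (fun z : Ω × ℝ => φ z.1 * (if z.2 < runInf X θ z.1 then (1 : ℝ) else 0)) := by
    letI : MeasurableSpace Ω := F θ
    have h1 : Measurable (fun z : Ω × ℝ => φ z.1) := hφ_meas.comp measurable_fst
    have h2 : Measurable (fun z : Ω × ℝ => runInf X θ z.1) := hrun.comp measurable_fst
    exact h1.mul (Measurable.ite (measurableSet_lt measurable_snd h2) measurable_const
      measurable_const)
  have hFt : Measurable[insiderSigma F L ε t, F t] (id : Ω → Ω) :=
    measurable_id'' le_sup_left
  have hLs : ∀ s ≤ t, Measurable[insiderSigma F L ε t] (fun ω => L ω + ε s ω) := by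
    intro s hs
    refine Measurable.mono (comap_measurable (fun ω => L ω + ε s ω)) ?_ le_rfl
    refine le_trans ?_ le_sup_right
    exact le_iSup₂ (f := fun s (_ : s ∈ Set.Iic t) =>
      MeasurableSpace.comap (fun ω => L ω + ε s ω) inferInstance) s hs
  have hI0 : insiderSigma F L ε t ≤ m0 := by
    refine sup_le (F.le t) (iSup₂_le fun s _ => ?_)
    exact (hL.add (hε_meas s)).comap_le
  have main := @final_abs Ω Ω Ω Ω (insiderSigma F L ε t) m0 (F θ) (F t) (incSigma ε t) P _ id id L (ε t) id
    (measurable_id'' (F.le θ)) (measurable_id'' (F.mono htθ)) hL (hε_meas t) (measurable_id'' hmE0)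
    (fun z => p θ z.2 z.1) (hp_meas θ) (fun z => hp_nonneg _ _ _)
    (fun z => p t z.2 z.1) (hp_meas t) (fun z => hp_nonneg _ _ _)
    (q t) (hq_meas t) (hq_nonneg t)
    (jacod_law (F θ) (F.le θ) L hL (p θ) (hp_nonneg θ) (hp_meas θ) (hp_density θ))
    (jacod_law (F t) (F.le t) L hL (p t) (hp_nonneg t) (hp_meas t) (hp_density t))
    ?_ ?_ (hq_density t)
    (fun z => φ z.1 * (if z.2 < runInf X θ z.1 then (1 : ℝ) else 0)) hYm C ?_ v hv_meas ?_
    hI0 ?_ ?_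
  · refine ⟨main.1, ?_⟩
    have hcongr : (fun ω' => φ ω' * (if θ < τ ω' then (1 : ℝ) else 0)) =
        fun ω' => φ ω' * (if L ω' < runInf X θ ω' then (1 : ℝ) else 0) := by
      funext ω
      simp only [hτ]
    rw [hcongr]
    exact main.2
  · -- independence of `(F_θ, L)` and the noise
    refine indepFun_of_indep _ _ _ ?_
    refine (indep_of_indep_of_le_left (indep_of_indep_of_le_right hε_indep ?_) ?_).symm
    · refine Measurable.comap_le ?_
      refine meas_pair ((⨆ s, F s) ⊔ MeasurableSpace.comap L inferInstance) (F θ) _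
        ?_ ?_
      · exact measurable_id'' ((le_iSup (fun s => (F s : MeasurableSpace Ω)) θ).trans le_sup_left)
      · exact Measurable.mono (comap_measurable L) le_sup_right le_rfl
    · refine Measurable.comap_le ?_
      refine meas_pair (⨆ s, MeasurableSpace.comap (ε s) inferInstance) _ (incSigma ε t)
        (hε_sup t) ?_
      exact measurable_id'' hmE_sup
  · refine indepFun_of_indep _ _ _ ?_
    rw [MeasurableSpace.comap_id]
    exact (hε_back t t le_rfl).symm
  · intro z
    rw [abs_mul]
    have h1 := hC z.1
    have h2 : |(if z.2 < runInf X θ z.1 then (1 : ℝ) else 0)| ≤ 1 := by split_ifs <;> simp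
    calc _ ≤ |φ z.1| * 1 := by gcongr
      _ ≤ C := by linarith
  · filter_upwards [hv] with l hl hint
    have e : (fun ω => φ ω * p θ l ω * (if l < runInf X θ ω then (1 : ℝ) else 0)) =
        fun ω => φ ω * (if l < runInf X θ ω then (1 : ℝ) else 0) * p θ l ω := by
      funext ω; ring
    rw [e] at hl
    refine ⟨integrable_condExp.congr hl.symm, ?_, ?_⟩
    · refine le_trans (le_of_eq ?_) (integral_abs_condExp_le (m := F t) _)
      refine integral_congr_ae ?_
      filter_upwards [hl] with ω hω
      simp only [id]
      rw [hω]
    · intro A hA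
      have hA' : MeasurableSet[F t] A := hA
      have h := setIntegral_condExp (F.le t) hint hA'
      exact (integral_congr_ae (ae_restrict_of_ae hl)).trans h
  · set mC : MeasurableSpace Ω := MeasurableSpace.comap (fun ω => (id (id ω), L ω + ε t ω, id ω))
      (@Prod.instMeasurableSpace _ _ (F t) (@Prod.instMeasurableSpace _ _ _ (incSigma ε t))) with hmC
    have hall : @Measurable Ω (Ω × ℝ × Ω) mC
        (@Prod.instMeasurableSpace _ _ (F t) (@Prod.instMeasurableSpace _ _ _ (incSigma ε t)))
        (fun ω => (id (id ω), L ω + ε t ω, id ω)) :=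
      @comap_measurable _ _ (@Prod.instMeasurableSpace _ _ (F t) (@Prod.instMeasurableSpace _ _ _ (incSigma ε t))) _
    have h1 : F t ≤ mC := by
      have := (@measurable_fst _ _ (F t) (@Prod.instMeasurableSpace _ _ _ (incSigma ε t))).comp hall
      intro s hs
      exact this hs
    have h23 := (@measurable_snd _ _ (F t) (@Prod.instMeasurableSpace _ _ _ (incSigma ε t))).comp hall
    have h2 : Measurable[mC] (fun ω => L ω + ε t ω) :=
      (@measurable_fst _ _ _ (incSigma ε t)).comp h23
    have h3 : (incSigma ε t) ≤ mC := by
      have := (@measurable_snd _ _ _ (incSigma ε t)).comp h23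
      intro s hs
      exact this hs
    refine sup_le h1 (iSup₂_le fun s hs => Measurable.comap_le ?_)
    have h4 : Measurable[mC] (fun ω => ε s ω - ε t ω) := by
      refine Measurable.mono (comap_measurable (fun ω => ε s ω - ε t ω)) (le_trans ?_ h3) le_rfl
      exact le_iSup₂ (f := fun s (_ : s ∈ Set.Iic t) =>
        MeasurableSpace.comap (fun ω => ε s ω - ε t ω) inferInstance) s hs
    have h5 := h2.add h4
    convert h5 using 1
    funext ω
    simp
  · exact meas_pair (insiderSigma F L ε t) (F t) _ hFt (hLs t le_rfl)
end
end

section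
/- Under Jacod's density hypothesis, suppose ε_t is a real random variable independent of F_∞ ∨ σ(L) whose law has density q_t with respect to Lebesgue measure, and set L_t := L + ε_t. Then for every bounded F_t ⊗ B(ℝ²)-measurable function H : Ω × ℝ × ℝ → ℝ, the random variable ∫_ℝ q_t(L_t − l) p_t(l) P^L(dl) is P-a.s. strictly positive and, P-almost surely, E_P[H(·, L, L_t) | F_t ∨ σ(L_t)] = ( ∫_ℝ H(·, l, L_t) q_t(L_t − l) p_t(l) P^L(dl) ) / ( ∫_ℝ q_t(L_t − l) p_t(l) P^L(dl) ). (The Bayes-type formula (5.6) established in the proof of Proposition 5.1.) -/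
open MeasureTheory ProbabilityTheory Set
open scoped NNReal Classical

noncomputable section

theorem aux_joint {Ω 𝓧 : Type*} [m0 : MeasurableSpace Ω] [MeasurableSpace 𝓧] {P : Measure Ω}
    [IsProbabilityMeasure P] (X : Ω → 𝓧) (hX : Measurable X) (L : Ω → ℝ) (hL : Measurable L)
    (p : 𝓧 × ℝ → ℝ) (hp : Measurable p) (hp0 : ∀ z, 0 ≤ p z)
    (hd : ∀ f : ℝ → ℝ, Measurable f → (∃ C, ∀ x, |f x| ≤ C) →
      (P[fun ω => f (L ω)|MeasurableSpace.comap X inferInstance]) =ᵐ[P]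
        fun ω => ∫ x, f x * p (X ω, x) ∂(P.map L)) :
    P.map (fun ω => (X ω, L ω)) =
      ((P.map X).prod (P.map L)).withDensity (fun z => ENNReal.ofReal (p z)) := by
  have : IsProbabilityMeasure (P.map L) := Measure.isProbabilityMeasure_map hL.aemeasurable
  have : IsProbabilityMeasure (P.map X) := Measure.isProbabilityMeasure_map hX.aemeasurable
  have hint : ∀ᵐ ω ∂P, Integrable (fun x => p (X ω, x)) (P.map L) := by
    have h1 := hd (fun _ => 1) measurable_const ⟨1, by simp⟩
    rw [condExp_const hX.comap_le] at h1
    filter_upwards [h1] with ω hω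
    by_contra hc
    simp only [one_mul] at hω
    rw [integral_undef hc] at hω
    exact one_ne_zero hω
  refine Measure.ext_prod fun {A B} hA hB => ?_
  rw [withDensity_apply _ (hA.prod hB), ← Measure.prod_restrict, lintegral_prod _ (by fun_prop),
    Measure.map_apply (by fun_prop) (hA.prod hB), setLIntegral_map hA (by fun_prop) hX]
  have h2 := hd (B.indicator 1) (measurable_one.indicator hB) ⟨1, fun x => by
    by_cases h : x ∈ B <;> simp [h]⟩
  have hi : Integrable (fun ω => B.indicator (1 : ℝ → ℝ) (L ω)) P := by
    refine Integrable.of_bound (C := 1) ?_ ?_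
    · exact ((measurable_one.indicator hB).comp hL).aestronglyMeasurable
    · filter_upwards with ω
      by_cases h : L ω ∈ B <;> simp [h]
  have h3 := setIntegral_condExp hX.comap_le hi ⟨A, hA, rfl⟩
  rw [setIntegral_congr_ae (hX hA) (h2.mono fun ω h _ => h)] at h3
  have h4 : ∫ ω in X ⁻¹' A, B.indicator (1 : ℝ → ℝ) (L ω) ∂P
      = P.real ((fun ω => (X ω, L ω)) ⁻¹' A ×ˢ B) := by
    have : (fun ω => B.indicator (1 : ℝ → ℝ) (L ω)) = (L ⁻¹' B).indicator 1 := by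
      ext ω; simp [indicator]
    rw [this, integral_indicator_one (hL hB), measureReal_restrict_apply (hL hB)]
    congr 1
    ext ω; simp [and_comm]
  rw [h4] at h3
  have h5 : Integrable (fun ω => ∫ x, B.indicator 1 x * p (X ω, x) ∂(P.map L)) P :=
    (integrable_congr h2).1 integrable_condExp
  rw [← ENNReal.ofReal_toReal (measure_ne_top P ((fun ω => (X ω, L ω)) ⁻¹' A ×ˢ B))]
  change ENNReal.ofReal (P.real _) = _
  rw [← h3, ofReal_integral_eq_lintegral_ofReal h5.integrableOn]
  · refine lintegral_congr_ae (ae_restrict_of_ae ?_)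
    filter_upwards [hint] with ω hω
    rw [← ofReal_integral_eq_lintegral_ofReal hω.integrableOn (ae_of_all _ fun x => hp0 _),
      ← integral_indicator hB]
    congr 2
    ext x
    by_cases h : x ∈ B <;> simp [h]
  · refine ae_of_all _ fun ω => integral_nonneg fun x => ?_
    exact mul_nonneg (indicator_nonneg (fun _ _ => zero_le_one) _) (hp0 _)

theorem aux_joint2 {Ω 𝓧 : Type*} [m0 : MeasurableSpace Ω] [MeasurableSpace 𝓧] {P : Measure Ω}
    [IsProbabilityMeasure P] (X : Ω → 𝓧) (hX : Measurable X) (L : Ω → ℝ) (hL : Measurable L)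
    (p : 𝓧 × ℝ → ℝ) (hp : Measurable p)
    (hj : P.map (fun ω => (X ω, L ω)) =
      ((P.map X).prod (P.map L)).withDensity (fun z => ENNReal.ofReal (p z)))
    (ε : Ω → ℝ) (hε : Measurable ε) (hind : IndepFun (fun ω => (X ω, L ω)) ε P)
    (q : ℝ → ℝ) (hq : Measurable q) (hq0 : ∀ x, 0 ≤ q x)
    (hqd : P.map ε = volume.withDensity fun x => ENNReal.ofReal (q x)) :
    P.map (fun ω => ((X ω, L ω + ε ω), L ω)) =
      (((P.map X).prod volume).prod (P.map L)).withDensity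
        (fun z => ENNReal.ofReal (q (z.1.2 - z.2) * p (z.1.1, z.2))) := by
  have : IsProbabilityMeasure (P.map L) := Measure.isProbabilityMeasure_map hL.aemeasurable
  have : IsProbabilityMeasure (P.map X) := Measure.isProbabilityMeasure_map hX.aemeasurable
  have : IsProbabilityMeasure (P.map ε) := Measure.isProbabilityMeasure_map hε.aemeasurable
  have hprod := (indepFun_iff_map_prod_eq_prod_map_map (by fun_prop) (by fun_prop)).1 hind
  refine Measure.ext_of_lintegral _ fun f hf => ?_
  rw [lintegral_map hf (by fun_prop)]
  have e1 : ∫⁻ ω, f ((X ω, L ω + ε ω), L ω) ∂P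
      = ∫⁻ z, f ((z.1.1, z.1.2 + z.2), z.1.2) ∂(P.map fun ω => ((X ω, L ω), ε ω)) := by
    rw [lintegral_map (by fun_prop) (by fun_prop)]
  rw [e1, hprod, lintegral_prod _ (by fun_prop), hj,
    lintegral_withDensity_eq_lintegral_mul _ (by fun_prop) (by fun_prop),
    lintegral_prod _ (by fun_prop),
    lintegral_withDensity_eq_lintegral_mul _ (by fun_prop) hf,
    lintegral_prod _ (by fun_prop), lintegral_prod _ (by fun_prop)]
  refine lintegral_congr fun x => ?_
  rw [lintegral_lintegral_swap (by fun_prop)]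
  refine lintegral_congr fun l => ?_
  simp only [Pi.mul_apply]
  rw [hqd, lintegral_withDensity_eq_lintegral_mul _ (by fun_prop) (by fun_prop),
    ← lintegral_const_mul _ (by fun_prop),
    ← lintegral_sub_right_eq_self _ l]
  refine lintegral_congr fun y => ?_
  simp only [Pi.mul_apply, add_sub_cancel]
  rw [ENNReal.ofReal_mul (hq0 _)]
  ring

theorem aux_bayes {Ω 𝓦 : Type*} [m0 : MeasurableSpace Ω] [MeasurableSpace 𝓦] {P : Measure Ω}
    [IsProbabilityMeasure P] (W : Ω → 𝓦) (hW : Measurable W) (L : Ω → ℝ) (hL : Measurable L)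
    (ν : Measure 𝓦) [SigmaFinite ν] (lam : Measure ℝ) [SigmaFinite lam]
    (g : 𝓦 × ℝ → ℝ) (hg : Measurable g) (hg0 : ∀ z, 0 ≤ g z)
    (hj : P.map (fun ω => (W ω, L ω)) = (ν.prod lam).withDensity (fun z => ENNReal.ofReal (g z)))
    (H : 𝓦 × ℝ → ℝ) (hH : Measurable H) (hHb : ∃ C, ∀ z, |H z| ≤ C) :
    (∀ᵐ ω ∂P, 0 < ∫ l, g (W ω, l) ∂lam) ∧
    (P[fun ω => H (W ω, L ω)|MeasurableSpace.comap W inferInstance]) =ᵐ[P]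
      fun ω => (∫ l, H (W ω, l) * g (W ω, l) ∂lam) / (∫ l, g (W ω, l) ∂lam) := by
  obtain ⟨C, hC⟩ := hHb
  have hWL : Measurable fun ω => (W ω, L ω) := by fun_prop
  have : IsProbabilityMeasure (P.map fun ω => (W ω, L ω)) :=
    Measure.isProbabilityMeasure_map hWL.aemeasurable
  have htot : ∫⁻ z, ENNReal.ofReal (g z) ∂(ν.prod lam) = 1 := by
    rw [← setLIntegral_univ, ← withDensity_apply _ MeasurableSet.univ, ← hj, measure_univ]
  have gint : Integrable g (ν.prod lam) := by
    refine ⟨hg.aestronglyMeasurable, ?_⟩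
    rw [hasFiniteIntegral_iff_ofReal (ae_of_all _ hg0), htot]
    exact ENNReal.one_lt_top
  have Hgint : Integrable (fun z => H z * g z) (ν.prod lam) :=
    gint.bdd_mul hH.aestronglyMeasurable (c := C) (ae_of_all _ hC)
  set Z : 𝓦 → ℝ := fun w => ∫ l, g (w, l) ∂lam with hZ
  set N : 𝓦 → ℝ := fun w => ∫ l, H (w, l) * g (w, l) ∂lam with hN
  have hZm : Measurable Z := hg.stronglyMeasurable.integral_prod_right'.measurable
  have hNm : Measurable N := (hH.mul hg).stronglyMeasurable.integral_prod_right'.measurable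
  have hZ0 : ∀ w, 0 ≤ Z w := fun w => integral_nonneg fun l => hg0 _
  have hW' : P.map W = ν.withDensity (fun w => ENNReal.ofReal (Z w)) := by
    refine Measure.ext_of_lintegral _ fun f hf => ?_
    have e1 : ∫⁻ w, f w ∂(P.map W) = ∫⁻ z, f z.1 ∂(P.map fun ω => (W ω, L ω)) := by
      rw [lintegral_map hf hW, lintegral_map (by fun_prop) hWL]
    rw [e1, hj, lintegral_withDensity_eq_lintegral_mul _ (by fun_prop) (by fun_prop),
      lintegral_prod _ (by fun_prop), lintegral_withDensity_eq_lintegral_mul _ (by fun_prop) hf]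
    refine lintegral_congr_ae ?_
    filter_upwards [gint.prod_right_ae] with w hw
    simp only [Pi.mul_apply]
    rw [lintegral_mul_const _ (by fun_prop), hZ,
      ofReal_integral_eq_lintegral_ofReal hw (ae_of_all _ fun l => hg0 _)]
  have hpos : ∀ᵐ w ∂(P.map W), 0 < Z w := by
    rw [hW', ae_withDensity_iff (by fun_prop)]
    refine ae_of_all _ fun w hw => ?_
    simpa using hw
  refine ⟨ae_of_ae_map hW.aemeasurable hpos, ?_⟩
  have hHi : Integrable (fun ω => H (W ω, L ω)) P :=
    Integrable.of_bound (C := C) (hH.comp hWL).aestronglyMeasurable (ae_of_all _ fun ω => hC _)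
  have NZ : ∀ w, ‖N w / Z w * Z w‖ ≤ ‖N w‖ := fun w => by
    by_cases h : Z w = 0
    · simp [h]
    · rw [div_mul_cancel₀ _ h]
  have NZeq : ∀ᵐ w ∂ν, N w = Z w * (N w / Z w) := by
    filter_upwards [gint.prod_right_ae] with w hw
    by_cases h : Z w = 0
    · have h0 := (integral_eq_zero_iff_of_nonneg (fun l => hg0 (w, l)) hw).1 h
      have : N w = 0 := by
        rw [hN]
        refine integral_eq_zero_of_ae ?_
        filter_upwards [h0] with l hl
        simp only [Pi.zero_apply] at hl ⊢
        rw [hl, mul_zero]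
      simp [this]
    · rw [mul_div_cancel₀ _ h]
  have Nint : Integrable N ν := Hgint.integral_prod_left
  have hNZi : Integrable (fun w => N w / Z w) (P.map W) := by
    rw [hW', integrable_withDensity_iff (by fun_prop) (ae_of_all _ fun w => ENNReal.ofReal_lt_top)]
    refine Nint.congr ?_
    filter_upwards [NZeq] with w hw
    rw [ENNReal.toReal_ofReal (hZ0 w), mul_comm]
    exact hw
  have hNZi' : Integrable (fun ω => N (W ω) / Z (W ω)) P := hNZi.comp_measurable hW
  refine (ae_eq_condExp_of_forall_setIntegral_eq hW.comap_le hHi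
    (fun s _ _ => hNZi'.integrableOn) ?_ ?_).symm
  · rintro s ⟨S, hS, rfl⟩ -
    have a1 : ∫ ω in W ⁻¹' S, N (W ω) / Z (W ω) ∂P = ∫ w in S, N w ∂ν := by
      rw [← setIntegral_map hS (f := fun w => N w / Z w) (hNm.div hZm).aestronglyMeasurable hW.aemeasurable, hW',
        setIntegral_withDensity_eq_setIntegral_toReal_smul (by fun_prop)
          (ae_of_all _ fun w => ENNReal.ofReal_lt_top) _ hS]
      refine integral_congr_ae (ae_restrict_of_ae ?_)
      filter_upwards [NZeq] with w hw
      rw [ENNReal.toReal_ofReal (hZ0 w), smul_eq_mul]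
      exact hw.symm
    have a2 : ∫ ω in W ⁻¹' S, H (W ω, L ω) ∂P = ∫ w in S, N w ∂ν := by
      have hS' : MeasurableSet (S ×ˢ (univ : Set ℝ)) := hS.prod MeasurableSet.univ
      have : W ⁻¹' S = (fun ω => (W ω, L ω)) ⁻¹' (S ×ˢ univ) := by ext; simp
      rw [this, ← setIntegral_map hS' (by fun_prop) hWL.aemeasurable, hj,
        setIntegral_withDensity_eq_setIntegral_toReal_smul (by fun_prop)
          (ae_of_all _ fun w => ENNReal.ofReal_lt_top) _ hS']
      have e : ∀ z, (ENNReal.ofReal (g z)).toReal • H z = H z * g z := fun z => by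
        rw [ENNReal.toReal_ofReal (hg0 z), smul_eq_mul, mul_comm]
      simp only [e]
      rw [setIntegral_prod _ Hgint.integrableOn]
      simp [hN]
    rw [a1, a2]
  · exact ((hNm.div hZm).comp (comap_measurable W)).aestronglyMeasurable

theorem aux_all {Ω 𝓧 : Type*} [m0 : MeasurableSpace Ω] [MeasurableSpace 𝓧] {P : Measure Ω}
    [IsProbabilityMeasure P] (X : Ω → 𝓧) (hX : Measurable X) (L : Ω → ℝ) (hL : Measurable L)
    (p : 𝓧 × ℝ → ℝ) (hp : Measurable p) (hp0 : ∀ z, 0 ≤ p z)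
    (hd : ∀ f : ℝ → ℝ, Measurable f → (∃ C, ∀ x, |f x| ≤ C) →
      (P[fun ω => f (L ω)|MeasurableSpace.comap X inferInstance]) =ᵐ[P]
        fun ω => ∫ x, f x * p (X ω, x) ∂(P.map L))
    (ε : Ω → ℝ) (hε : Measurable ε)
    (hind : Indep (MeasurableSpace.comap ε inferInstance)
      (MeasurableSpace.comap X inferInstance ⊔ MeasurableSpace.comap L inferInstance) P)
    (q : ℝ → ℝ) (hq : Measurable q) (hq0 : ∀ x, 0 ≤ q x)
    (hqd : P.map ε = volume.withDensity fun x => ENNReal.ofReal (q x))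
    (H : 𝓧 × ℝ × ℝ → ℝ) (hH : Measurable H) (hHb : ∃ C, ∀ z, |H z| ≤ C) :
    (∀ᵐ ω ∂P, 0 < ∫ l, q (L ω + ε ω - l) * p (X ω, l) ∂(P.map L)) ∧
    (P[fun ω => H (X ω, L ω, L ω + ε ω)|MeasurableSpace.comap X inferInstance ⊔
        MeasurableSpace.comap (fun ω => L ω + ε ω) inferInstance]) =ᵐ[P]
      fun ω => (∫ l, H (X ω, l, L ω + ε ω) * q (L ω + ε ω - l) * p (X ω, l) ∂(P.map L))
        / (∫ l, q (L ω + ε ω - l) * p (X ω, l) ∂(P.map L)) := by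
  have : IsProbabilityMeasure (P.map L) := Measure.isProbabilityMeasure_map hL.aemeasurable
  have : IsProbabilityMeasure (P.map X) := Measure.isProbabilityMeasure_map hX.aemeasurable
  have hj := aux_joint X hX L hL p hp hp0 hd
  have hind' : IndepFun (fun ω => (X ω, L ω)) ε P := by
    refine IndepFun.symm ?_
    rw [IndepFun_iff_Indep]
    refine indep_of_indep_of_le_right hind (le_of_eq ?_)
    exact MeasurableSpace.comap_prodMk X L
  have hj2 := aux_joint2 X hX L hL p hp hj ε hε hind' q hq hq0 hqd
  have key := aux_bayes (fun ω => (X ω, L ω + ε ω)) (by fun_prop) L hL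
    ((P.map X).prod volume) (P.map L) (fun z => q (z.1.2 - z.2) * p (z.1.1, z.2))
    (by fun_prop) (fun z => mul_nonneg (hq0 _) (hp0 _)) hj2
    (fun z => H (z.1.1, z.2, z.1.2)) (by fun_prop)
    (by obtain ⟨C, hC⟩ := hHb; exact ⟨C, fun z => hC _⟩)
  have hc : MeasurableSpace.comap (fun ω => (X ω, L ω + ε ω)) inferInstance =
      MeasurableSpace.comap X inferInstance ⊔
        MeasurableSpace.comap (fun ω => L ω + ε ω) inferInstance :=
    MeasurableSpace.comap_prodMk X (fun ω => L ω + ε ω)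
  rw [hc] at key
  simpa only [mul_assoc] using key

/-- **The Bayes-type formula (5.6) in the proof of Proposition 5.1.** Under Jacod's density
hypothesis, if `ε_t` is independent of `F_∞ ∨ σ(L)` with Lebesgue density `q_t`, and
`L_t := L + ε_t`, then for every bounded `F_t ⊗ B(ℝ²)`-measurable `H`, the normalizing
random variable `∫ q_t(L_t − l) p_t(l) P^L(dl)` is a.s. positive, and `P`-a.s.,
`E_P[H(·,L,L_t) | F_t ∨ σ(L_t)] = (∫ H(·,l,L_t) q_t(L_t − l) p_t(l) P^L(dl)) /
(∫ q_t(L_t − l) p_t(l) P^L(dl))`. -/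
theorem bayes_formula_noisy_barrier
    {Ω : Type*} [m0 : MeasurableSpace Ω] {P : Measure Ω} [IsProbabilityMeasure P]
    (F : Filtration ℝ≥0 m0)
    (L : Ω → ℝ) (hL : Measurable L)
    -- Jacod's density hypothesis
    (p : ℝ≥0 → ℝ → Ω → ℝ)
    (hp_nonneg : ∀ t x ω, 0 ≤ p t x ω)
    (hp_meas : ∀ t, Measurable[(F t).prod inferInstance] fun q : Ω × ℝ => p t q.2 q.1)
    (hp_pos : ∀ t, ∀ᵐ ω ∂P, 0 < p t (L ω) ω)
    (hp_density : ∀ (t : ℝ≥0) (f : ℝ → ℝ), Measurable f → (∃ C, ∀ x, |f x| ≤ C) →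
      (P[fun ω => f (L ω)|F t]) =ᵐ[P] fun ω => ∫ x, f x * p t x ω ∂(P.map L))
    -- the noise at time `t`: independent of `F_∞ ∨ σ(L)`, with Lebesgue density `q`
    (ε : Ω → ℝ) (hε_meas : Measurable ε)
    (hε_indep : Indep (MeasurableSpace.comap ε inferInstance)
      ((⨆ s, F s) ⊔ MeasurableSpace.comap L inferInstance) P)
    (q : ℝ → ℝ) (hq_meas : Measurable q) (hq_nonneg : ∀ x, 0 ≤ q x)
    (hq_density : P.map ε = volume.withDensity fun x => ENNReal.ofReal (q x))
    (t : ℝ≥0)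
    (H : Ω × ℝ × ℝ → ℝ)
    (hH_meas : Measurable[(F t).prod inferInstance] H)
    (hH_bdd : ∃ C, ∀ z, |H z| ≤ C) :
    (∀ᵐ ω ∂P, 0 < ∫ l, q (L ω + ε ω - l) * p t l ω ∂(P.map L)) ∧
    (P[fun ω => H (ω, L ω, L ω + ε ω)|
        F t ⊔ MeasurableSpace.comap (fun ω => L ω + ε ω) inferInstance]) =ᵐ[P]
      fun ω => (∫ l, H (ω, l, L ω + ε ω) * q (L ω + ε ω - l) * p t l ω ∂(P.map L))
        / (∫ l, q (L ω + ε ω - l) * p t l ω ∂(P.map L)) := by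
  have hFt : F t ≤ m0 := F.le t
  have hid : @Measurable Ω Ω m0 (F t) id := measurable_id'' hFt
  have hcid : @MeasurableSpace.comap Ω Ω id (F t) = F t := MeasurableSpace.comap_id
  have key := @aux_all Ω Ω m0 (F t) P _ id hid L hL (fun z => p t z.2 z.1) (hp_meas t)
    (fun z => hp_nonneg _ _ _) (fun f hf hb => by
      change P[fun ω => f (L ω)|@MeasurableSpace.comap Ω Ω id (F t)] =ᵐ[P] _
      rw [hcid]
      exact hp_density t f hf hb) ε hε_meas (by
      refine indep_of_indep_of_le_right hε_indep ?_
      change @MeasurableSpace.comap Ω Ω id (F t) ⊔ _ ≤ _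
      rw [hcid]
      exact sup_le_sup_right (le_iSup (fun s => (F s : MeasurableSpace Ω)) t) _)
    q hq_meas hq_nonneg hq_density H hH_meas hH_bdd
  change _ ∧ P[_|@MeasurableSpace.comap Ω Ω id (F t) ⊔ _] =ᵐ[P] _ at key
  rw [hcid] at key
  exact key
end
end
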